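/- arXiv:1001.3070 — 5 statements merged into one kernel-verified Lean document; each statement's English description precedes it below -/
import Mathlib

section
/- Let B be a compact Hausdorff space, let n ≥ 1, let M be an n-dimensional subspace of C(B), let f ∈ C(B) with f ∉ M, and let m* ∈ M. Then m* is a strongly unique best approximant to f from M if and only if there exist k distinct points x₁, …, x_k ∈ A_{f−m*} with n+1 ≤ k ≤ 2n and strictly positive reals λ₁, …, λ_k such that Σ_{i=1}^{k} λᵢ·sgn((f−m*)(xᵢ))·m(xᵢ) = 0 for all m ∈ M, and the only m ∈ M vanishing at all of x₁, …, x_k is m = 0 (i.e. the restriction of M to {x₁,…,x_k} has dimension n). -/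
/-! Write `e = f - m*`. Strong uniqueness is equivalent to the strict Kolmogorov criterion: every nonzero
`m ∈ M` satisfies `e x * m x < 0` at some point `x` of `A_e`.

* If the points `xᵢ` and weights `λᵢ` are given, a nonzero `m ∈ M` is nonzero at some `xᵢ`, so the
  annihilation relation forces some `sgn e(xᵢ) m(xᵢ) < 0`. Compactness of the unit sphere of `M` makes
  this uniform, which is strong uniqueness (`exists_uniform_of_sum_eq_zero`).
* Conversely, strong uniqueness gives the criterion by a perturbation argument on `m* + t • h` for
  small `t > 0` (`exists_mul_neg_of_stronglyUnique`). In coordinates with respect to a basis of `M`,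
  it says that the vectors `sgn e(x) • (evaluation at x)`, `x ∈ A_e`, lie in no closed half-space, so
  that the convex cone they generate is everything (`hull_eq_top`). To keep at most `2n` of them,
  choose a basis `b₁, …, bₙ` among them and write `-(b₁ + ⋯ + bₙ)` as a nonnegative combination of
  linearly independent vectors by the conic Carathéodory theorem (`conic_caratheodory`): the vectors
  used are at most `n + n` in number, span, and have a positive linear relation
  (`exists_small_posSpanning`).
-/

/-! ### Positive spanning sets in finite dimension -/

/-- Conic Carathéodory: a vector of the convex cone generated by `S` is a nonnegative combination of
linearly independent vectors of `S`. -/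
theorem conic_caratheodory {E : Type*} [AddCommGroup E] [Module ℝ E] (S : Set E) (v : E)
    (hv : v ∈ PointedCone.hull ℝ S) :
    ∃ t : Finset E, ↑t ⊆ S ∧ LinearIndepOn ℝ id (t : Set E) ∧
      ∃ c : E → ℝ, (∀ s ∈ t, 0 ≤ c s) ∧ ∑ s ∈ t, c s • s = v := by
  classical
  let P : ℕ → Prop := fun k => ∃ t : Finset E, t.card = k ∧ ↑t ⊆ S ∧
    ∃ c : E → ℝ, (∀ s ∈ t, 0 ≤ c s) ∧ ∑ s ∈ t, c s • s = v
  have hP : ∃ k, P k := by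
    obtain ⟨c, hcS, hc⟩ := Submodule.mem_span_set.1 hv
    exact ⟨_, c.support, rfl, hcS, fun s => (c s : ℝ), fun s _ => (c s).2, hc⟩
  -- a representation with the fewest vectors is linearly independent
  obtain ⟨t, htc, htS, c, hc, hsum⟩ := Nat.find_spec hP
  refine ⟨t, htS, ?_, c, hc, hsum⟩
  by_contra hdep
  rw [linearIndepOn_finset_iff] at hdep
  push Not at hdep
  have hg' : ∃ g : E → ℝ, ∑ s ∈ t, g s • s = 0 ∧ ∃ s ∈ t, 0 < g s := by
    obtain ⟨g, hg, i, hi, hgi⟩ := hdep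
    rcases lt_or_gt_of_ne hgi with h | h
    · refine ⟨fun s => -g s, ?_, i, hi, by simpa using h⟩
      simpa using hg
    · exact ⟨g, hg, i, hi, h⟩
  obtain ⟨g, hg, i, hi, hgi⟩ := hg'
  -- the largest multiple of `g` that can be subtracted from `c` is the smallest ratio `c s / g s`
  obtain ⟨j, hj, hmin⟩ := (t.filter fun s => 0 < g s).exists_min_image (fun s => c s / g s)
    ⟨i, by simp [hi, hgi]⟩
  rw [Finset.mem_filter] at hj
  obtain ⟨hjt, hgj⟩ := hj
  set r := c j / g j with hr
  have hr0 : 0 ≤ r := div_nonneg (hc j hjt) hgj.le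
  have hlt : (t.erase j).card < Nat.find hP := by
    rw [← htc]; exact Finset.card_erase_lt_of_mem hjt
  refine Nat.find_min hP hlt ⟨t.erase j, rfl, ?_, fun s => c s - r * g s, ?_, ?_⟩
  · exact fun s hs => htS (Finset.mem_of_mem_erase hs)
  · intro s hs
    have hst := Finset.mem_of_mem_erase hs
    rcases le_or_gt (g s) 0 with h | h
    · have := mul_nonpos_of_nonneg_of_nonpos hr0 h
      linarith [hc s hst]
    · have := hmin s (by simp [hst, h])
      rw [le_div_iff₀ h] at this
      linarith
  · have hj0 : (c j - r * g j) • j = 0 := by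
      rw [hr, div_mul_cancel₀ _ hgj.ne', sub_self, zero_smul]
    refine (Finset.sum_erase (f := fun s => (c s - r * g s) • s) t hj0).trans ?_
    simp only [sub_smul, Finset.sum_sub_distrib, mul_smul, ← Finset.smul_sum, hg, hsum]
    simp

/-- A set contained in no closed half-space generates the whole space as a convex cone: the cone is
dense by the Hahn-Banach theorem, and a dense convex set in finite dimension is everything. -/
theorem hull_eq_top {E : Type*} [NormedAddCommGroup E] [NormedSpace ℝ E] [FiniteDimensional ℝ E]
    (S : Set E) (h : ∀ l : E →L[ℝ] ℝ, l ≠ 0 → ∃ s ∈ S, l s < 0) (v : E) :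
    v ∈ PointedCone.hull ℝ S := by
  set C := PointedCone.hull ℝ S with hC
  have hconv : Convex ℝ (C : Set E) := C.convex
  have hdense : closure (C : Set E) = Set.univ := by
    refine Set.eq_univ_of_forall fun x => ?_
    by_contra hx
    obtain ⟨l, u, hl, hu⟩ := geometric_hahn_banach_closed_point hconv.closure isClosed_closure hx
    have hu0 : 0 < u := by simpa using hl 0 (subset_closure C.zero_mem)
    obtain ⟨s, hs, hls⟩ := h (-l) (by
      rintro h0
      have : l x = 0 := by simpa using congrArg (fun k : E →L[ℝ] ℝ => k x) h0
      linarith)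
    have hls : 0 < l s := by simpa using hls
    have hmem : (u / l s) • s ∈ C :=
      C.smul_mem (by positivity) (Submodule.subset_span hs)
    have := hl _ (subset_closure hmem)
    rw [map_smul, smul_eq_mul, div_mul_cancel₀ _ hls.ne'] at this
    exact lt_irrefl _ this
  have haff : affineSpan ℝ (C : Set E) = ⊤ := by
    have hcl := (affineSpan ℝ (C : Set E)).closed_of_finiteDimensional
    have := closure_minimal (subset_affineSpan ℝ (C : Set E)) hcl
    rw [hdense] at this
    exact SetLike.coe_injective (by simpa using this)
  have hint := hconv.interior_closure_eq_interior_of_nonempty_interior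
    (hconv.interior_nonempty_iff_affineSpan_eq_top.2 haff)
  rw [hdense, interior_univ] at hint
  exact interior_subset (hint ▸ Set.mem_univ v)

/-- Steinitz-type theorem: a set contained in no closed half-space has a finite subset of at most
`2 dim E` vectors that spans `E` and satisfies a linear relation with positive coefficients. -/
theorem exists_small_posSpanning {E : Type*} [NormedAddCommGroup E] [NormedSpace ℝ E]
    [FiniteDimensional ℝ E] (hE : 0 < Module.finrank ℝ E)
    (S : Set E) (h : ∀ l : E →L[ℝ] ℝ, l ≠ 0 → ∃ s ∈ S, l s < 0) :
    ∃ t : Finset E, ↑t ⊆ S ∧ Module.finrank ℝ E + 1 ≤ t.card ∧ t.card ≤ 2 * Module.finrank ℝ E ∧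
      Submodule.span ℝ (t : Set E) = ⊤ ∧
      ∃ w : E → ℝ, (∀ s ∈ t, 0 < w s) ∧ ∑ s ∈ t, w s • s = 0 := by
  classical
  have hspan : Submodule.span ℝ S = ⊤ := by
    refine eq_top_iff.2 fun v _ => ?_
    obtain ⟨t, htS, -, c, -, rfl⟩ := conic_caratheodory S v (hull_eq_top S h v)
    exact Submodule.sum_mem _ fun s hs => Submodule.smul_mem _ _ (Submodule.subset_span (htS hs))
  obtain ⟨b, hbS, hbspan, hbli⟩ := exists_linearIndependent ℝ S
  have hcard : ∀ t : Finset E, LinearIndepOn ℝ id (t : Set E) → t.card ≤ Module.finrank ℝ E := by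
    intro t ht
    have := ht.linearIndependent.fintype_card_le_finrank
    simpa using this
  have hbfin : b.Finite := hbli.setFinite
  lift b to Finset E using hbfin
  obtain ⟨t, htS, htli, c, hc, hsum⟩ :=
    conic_caratheodory S (-∑ s ∈ b, s) (hull_eq_top S h _)
  let w : E → ℝ := fun s => (if s ∈ b then 1 else 0) + (if s ∈ t then c s else 0)
  have hc' : ∀ s, 0 ≤ (if s ∈ t then c s else 0) := by
    intro s
    split_ifs with hs
    exacts [hc s hs, le_rfl]
  have hw0 : ∀ s, 0 ≤ w s := fun s =>
    add_nonneg (by split_ifs <;> norm_num) (hc' s)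
  -- vectors of `t` with zero weight have to be discarded
  let T := (b ∪ t).filter fun s => 0 < w s
  have hbT : b ⊆ T := by
    intro s hs
    have : 0 < w s := by
      have := hc' s
      simp only [w, hs, if_true]
      linarith
    simp [T, hs, this]
  have hTspan : Submodule.span ℝ (T : Set E) = ⊤ := by
    refine eq_top_iff.2 ?_
    rw [← hspan, ← hbspan]
    exact Submodule.span_mono (by exact_mod_cast hbT)
  have hwpos : ∀ s ∈ T, 0 < w s := fun s hs => (Finset.mem_filter.1 hs).2
  have hTsum : ∑ s ∈ T, w s • s = 0 := by
    have h1 : ∑ s ∈ T, w s • s = ∑ s ∈ b ∪ t, w s • s := by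
      refine Finset.sum_filter_of_ne fun s _ hs => lt_of_le_of_ne (hw0 s) fun h0 => hs ?_
      rw [← h0, zero_smul]
    rw [h1]
    simp only [w, add_smul, Finset.sum_add_distrib, ite_smul, one_smul, zero_smul]
    rw [Finset.sum_ite_mem, Finset.sum_ite_mem, Finset.inter_eq_right.2 Finset.subset_union_left,
      Finset.inter_eq_right.2 Finset.subset_union_right, hsum]
    simp
  have hTS : (T : Set E) ⊆ S := by
    intro s hs
    rcases Finset.mem_union.1 (Finset.mem_filter.1 hs).1 with h1 | h1
    exacts [hbS h1, htS h1]
  refine ⟨T, hTS, ?_, ?_, hTspan, w, hwpos, hTsum⟩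
  · -- a spanning family of at most `dim E` vectors admits no nontrivial relation
    by_contra hlt
    have hge : Module.finrank ℝ E ≤ T.card := by
      have := finrank_span_finset_le_card (R := ℝ) T
      rwa [Set.finrank, hTspan, finrank_top] at this
    have hli : LinearIndependent ℝ (fun s : T => (s : E)) :=
      linearIndependent_of_top_le_span_of_card_eq_finrank (by simp [hTspan])
        (by simp; omega)
    have hli' : LinearIndepOn ℝ id (T : Set E) := hli
    rw [linearIndepOn_finset_iff] at hli'
    obtain ⟨s, hs⟩ : T.Nonempty := Finset.card_pos.1 (by omega)
    exact (hwpos s hs).ne' (hli' w hTsum s hs)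
  · calc T.card ≤ (b ∪ t).card := Finset.card_filter_le _ _
      _ ≤ b.card + t.card := Finset.card_union_le _ _
      _ ≤ 2 * Module.finrank ℝ E := by
        have := hcard b hbli
        have := hcard t htli
        omega

/-! ### Strong uniqueness and the strict Kolmogorov criterion -/

/-- Strong uniqueness implies the strict Kolmogorov criterion, stated for `e = f - m*` and the
perturbations `e - t • h`. -/
theorem exists_mul_neg_of_stronglyUnique {B : Type*} [TopologicalSpace B] [CompactSpace B]
    (e h : C(B, ℝ)) (he : e ≠ 0) (hh : h ≠ 0) (γ : ℝ) (hγ : 0 < γ)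
    (H : ∀ t : ℝ, 0 < t → γ * (t * ‖h‖) ≤ ‖e - t • h‖ - ‖e‖) :
    ∃ x, |e x| = ‖e‖ ∧ e x * h x < 0 := by
  by_contra hcon
  push Not at hcon
  have hen : 0 < ‖e‖ := norm_pos_iff.2 he
  have hhn : 0 < ‖h‖ := norm_pos_iff.2 hh
  set δ := γ * ‖h‖ * ‖e‖ / 2 with hδ
  have hδ0 : 0 < δ := by positivity
  have hle : ∀ x, |e x| ≤ ‖e‖ := fun x => e.norm_coe_le_norm x
  have hleh : ∀ x, |h x| ≤ ‖h‖ := fun x => h.norm_coe_le_norm x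
  -- away from the neighbourhood `{e * h > -δ}` of the extremal set, `|e|` is bounded below `‖e‖`
  have hcpt : IsCompact {x | e x * h x ≤ -δ} :=
    (isClosed_le (by fun_prop) continuous_const).isCompact
  obtain ⟨η, hη, hηle⟩ := hcpt.exists_forall_le' (f := fun x => ‖e‖ - |e x|) (a := 0)
    (by fun_prop) (fun x hx => by
      have hne : |e x| ≠ ‖e‖ := fun h1 => by
        have h2 := hcon x h1
        have h3 : e x * h x ≤ -δ := hx
        linarith
      exact sub_pos.2 (lt_of_le_of_ne (hle x) hne))
  set t := min (γ * ‖e‖ / ‖h‖) (η / ‖h‖) with ht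
  have ht0 : 0 < t := lt_min (by positivity) (by positivity)
  have ht1 : t * ‖h‖ ≤ γ * ‖e‖ := (le_div_iff₀ hhn).1 (min_le_left _ _)
  have ht2 : t * ‖h‖ ≤ η := (le_div_iff₀ hhn).1 (min_le_right _ _)
  have hR : 0 < ‖e‖ + γ * (t * ‖h‖) := by positivity
  have hlt : ‖e - t • h‖ < ‖e‖ + γ * (t * ‖h‖) := by
    rw [ContinuousMap.norm_lt_iff _ hR]
    intro x
    simp only [ContinuousMap.sub_apply, ContinuousMap.smul_apply, smul_eq_mul, Real.norm_eq_abs]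
    have hthx : t * |h x| ≤ t * ‖h‖ := mul_le_mul_of_nonneg_left (hleh x) ht0.le
    rcases le_or_gt (e x * h x) (-δ) with hx | hx
    · have h1 : η ≤ ‖e‖ - |e x| := hηle x hx
      have h2 : |e x - t * h x| ≤ |e x| + t * |h x| := by
        have := abs_sub (e x) (t * h x)
        rwa [abs_mul, abs_of_pos ht0] at this
      have h3 : 0 < γ * (t * ‖h‖) := by positivity
      linarith
    · refine abs_lt_of_sq_lt_sq ?_ hR.le
      have h1 : e x ^ 2 ≤ ‖e‖ ^ 2 := by
        rw [← sq_abs (e x)]; exact pow_le_pow_left₀ (abs_nonneg _) (hle x) 2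
      have h2 : (t * h x) ^ 2 ≤ (t * ‖h‖) ^ 2 := by
        rw [← sq_abs (t * h x), abs_mul, abs_of_pos ht0]
        exact pow_le_pow_left₀ (by positivity) hthx 2
      have h3 : t * (-δ) < t * (e x * h x) := mul_lt_mul_of_pos_left hx ht0
      have h4 : (t * ‖h‖) ^ 2 ≤ (γ * ‖e‖) * (t * ‖h‖) := by
        rw [sq]; exact mul_le_mul_of_nonneg_right ht1 (by positivity)
      have h5 : 0 < (γ * (t * ‖h‖)) ^ 2 := by positivity
      have h6 : t * (-δ) = - (γ * ‖e‖ * (t * ‖h‖)) / 2 := by rw [hδ]; ring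
      nlinarith
  have := H t ht0
  linarith

/-- A positive annihilating combination of finitely many evaluations that separate the points of `M`
is quantitative: on the unit sphere of `M`, the most negative value is bounded away from `0`. -/
theorem exists_uniform_of_sum_eq_zero {B : Type*} [TopologicalSpace B] [CompactSpace B]
    (M : Submodule ℝ C(B, ℝ)) [FiniteDimensional ℝ M] {k : ℕ} (hk : 0 < k) (x : Fin k → B)
    (a : Fin k → ℝ) (ha : ∀ i, a i ≠ 0) (lam : Fin k → ℝ) (hlam : ∀ i, 0 < lam i)
    (hsum : ∀ m ∈ M, ∑ i, lam i * a i * m (x i) = 0)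
    (hsep : ∀ m ∈ M, (∀ i, m (x i) = 0) → m = 0) :
    ∃ γ : ℝ, 0 < γ ∧ ∀ m ∈ M, ∃ i, γ * ‖m‖ ≤ -(a i * m (x i)) := by
  have hne : (Finset.univ : Finset (Fin k)).Nonempty := ⟨⟨0, hk⟩, Finset.mem_univ _⟩
  let φ : M → ℝ := fun m => Finset.univ.sup' hne fun i => -(a i * (m : C(B, ℝ)) (x i))
  have hφ : Continuous φ := by
    refine Continuous.finset_sup'_apply hne fun i _ => ?_
    have : Continuous fun m : M => (m : C(B, ℝ)) (x i) :=
      (continuous_eval_const (x i)).comp continuous_subtype_val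
    exact (this.const_mul _).neg
  obtain ⟨γ, hγ, hγle⟩ := (isCompact_sphere (0 : M) 1).exists_forall_le' (a := 0)
    hφ.continuousOn (by
      intro m hm
      by_contra hcon
      have hnn : ∀ i, 0 ≤ a i * (m : C(B, ℝ)) (x i) := by
        intro i
        have h1 := (Finset.le_sup' (fun i => -(a i * (m : C(B, ℝ)) (x i)))
          (Finset.mem_univ i)).trans (not_lt.1 hcon)
        linarith
      have h0 : ∀ i ∈ Finset.univ, lam i * a i * (m : C(B, ℝ)) (x i) = 0 :=
        (Finset.sum_eq_zero_iff_of_nonneg fun i _ => by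
          rw [mul_assoc]; exact mul_nonneg (hlam i).le (hnn i)).1 (hsum m m.2)
      have hm0 : (m : C(B, ℝ)) = 0 := hsep m m.2 fun i => by
        simpa [(hlam i).ne', ha i] using h0 i (Finset.mem_univ i)
      have : m = 0 := Subtype.ext hm0
      simp [this] at hm)
  refine ⟨γ, hγ, fun m hm => ?_⟩
  rcases eq_or_ne m 0 with rfl | hm0
  · exact ⟨⟨0, hk⟩, by simp⟩
  have hmn : 0 < ‖m‖ := norm_pos_iff.2 hm0
  let m' : M := ‖m‖⁻¹ • ⟨m, hm⟩
  have hm' : m' ∈ Metric.sphere (0 : M) 1 := by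
    simp [m', norm_smul, hmn.ne']
  obtain ⟨i, -, hi⟩ := (Finset.le_sup'_iff hne).1 (hγle m' hm')
  refine ⟨i, ?_⟩
  have hval : (m' : C(B, ℝ)) (x i) = ‖m‖⁻¹ * m (x i) := by simp [m']
  rw [hval] at hi
  calc γ * ‖m‖ ≤ -(a i * (‖m‖⁻¹ * m (x i))) * ‖m‖ := mul_le_mul_of_nonneg_right hi hmn.le
    _ = -(a i * m (x i)) := by field_simp

/-! ### From extremal points to a small annihilating set -/

/-- (Characterization of strong uniqueness in `C(B)`.)
Let `M` be an `n`-dimensional subspace of `C(B)` (`n ≥ 1`), `f ∉ M`, `m* ∈ M`.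
Then `m*` is a strongly unique best approximant to `f` from `M` iff there are
`k` distinct points `x₁, …, x_k ∈ A_{f-m*}` with `n+1 ≤ k ≤ 2n` and positive
`λ₁, …, λ_k` with `Σ λᵢ · sgn((f-m*)(xᵢ)) · m(xᵢ) = 0` for all `m ∈ M`, and the
only element of `M` vanishing at all the `xᵢ` is `0`. -/
theorem stmt_3 {B : Type*} [TopologicalSpace B] [CompactSpace B] [T2Space B]
    (n : ℕ) (hn : 1 ≤ n)
    (M : Submodule ℝ C(B, ℝ)) (hdim : Module.finrank ℝ M = n)
    (f : C(B, ℝ)) (hf : f ∉ M) (mstar : C(B, ℝ)) (hmem : mstar ∈ M) :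
    (∃ γ : ℝ, 0 < γ ∧ ∀ m ∈ M, γ * ‖m - mstar‖ ≤ ‖f - m‖ - ‖f - mstar‖) ↔
    (∃ k : ℕ, n + 1 ≤ k ∧ k ≤ 2 * n ∧
      ∃ x : Fin k → B, Function.Injective x ∧
        (∀ i, |(f - mstar) (x i)| = ‖f - mstar‖) ∧
        (∃ lam : Fin k → ℝ, (∀ i, 0 < lam i) ∧
          ∀ m ∈ M, ∑ i, lam i * Real.sign ((f - mstar) (x i)) * m (x i) = 0) ∧
        (∀ m ∈ M, (∀ i, m (x i) = 0) → m = 0)) := by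
  have hfin : FiniteDimensional ℝ M := Module.finite_of_finrank_pos (by omega)
  obtain ⟨e, rfl⟩ : ∃ e, f = e + mstar := ⟨f - mstar, by abel⟩
  have he : e ≠ 0 := fun h0 => hf (by rwa [h0, zero_add])
  have hsplit : ∀ m, e + mstar - m = e - (m - mstar) := fun m => by abel
  simp only [add_sub_cancel_right]
  simp only [hsplit]
  have hen : 0 < ‖e‖ := norm_pos_iff.2 he
  have hsne : ∀ x, |e x| = ‖e‖ → e x ≠ 0 := fun x hx h0 => by
    rw [h0, abs_zero] at hx; exact hen.ne hx
  constructor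
  · rintro ⟨γ, hγ, hsu⟩
    have hK : ∀ h ∈ M, h ≠ 0 → ∃ x, |e x| = ‖e‖ ∧ e x * h x < 0 := by
      intro h hh hh0
      refine exists_mul_neg_of_stronglyUnique e h he hh0 γ hγ fun t ht => ?_
      have := hsu (mstar + t • h) (M.add_mem hmem (M.smul_mem t hh))
      rwa [add_sub_cancel_left, norm_smul, Real.norm_of_nonneg ht.le] at this
    let b := Module.finBasisOfFinrankEq ℝ M hdim
    -- signed evaluations, in the coordinates dual to the basis `b`
    let ψ : B → Fin n → ℝ := fun x j => Real.sign (e x) * (b j : C(B, ℝ)) (x)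
    have key : ∀ (l : (Fin n → ℝ) →ₗ[ℝ] ℝ) (x : B),
        l (ψ x) = Real.sign (e x) *
          ((∑ j, l (Pi.single j 1) • b j : M) : C(B, ℝ)) x := by
      intro l x
      rw [LinearMap.pi_apply_eq_sum_univ l (ψ x)]
      simp only [ψ, smul_eq_mul, Submodule.coe_sum, Submodule.coe_smul, ContinuousMap.coe_sum,
        Finset.sum_apply, ContinuousMap.smul_apply, Finset.mul_sum]
      refine Finset.sum_congr rfl fun j _ => ?_
      have : (fun i => if j = i then (1 : ℝ) else 0) = Pi.single j 1 := by
        ext i; simp [Pi.single_apply, eq_comm]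
      rw [this]; ring
    have hfr : Module.finrank ℝ (Fin n → ℝ) = n := by simp
    obtain ⟨T, hTS, hT1, hT2, hTspan, w, hw, hwsum⟩ :=
      exists_small_posSpanning (E := Fin n → ℝ) (by omega) (ψ '' {x | |e x| = ‖e‖}) (by
        intro l hl
        have hm0 : ((∑ j, l (Pi.single j 1) • b j : M) : C(B, ℝ)) ≠ 0 := by
          intro h0
          have h1 : ∑ j, l (Pi.single j 1) • b j = 0 := Subtype.ext h0
          have h2 := Fintype.linearIndependent_iff.1 b.linearIndependent _ h1
          refine hl (ContinuousLinearMap.coe_injective (LinearMap.pi_ext' fun j => ?_))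
          ext
          simpa using h2 j
        obtain ⟨x, hx, hneg⟩ := hK _ (Subtype.property _) hm0
        refine ⟨ψ x, ⟨x, hx, rfl⟩, ?_⟩
        have hkey := key l.toLinearMap x
        simp only [ContinuousLinearMap.coe_coe] at hkey
        rw [hkey]
        rcases lt_or_gt_of_ne (hsne x hx) with h | h
        · rw [Real.sign_of_neg h]
          nlinarith
        · rw [Real.sign_of_pos h]
          nlinarith)
    rw [hfr] at hT1 hT2
    have hpre : ∀ i : Fin T.card, ∃ x, |e x| = ‖e‖ ∧ ψ x = (T.equivFin.symm i : Fin n → ℝ) :=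
      fun i => hTS (T.equivFin.symm i).2
    choose x hxA hxψ using hpre
    -- an element of `M` as a functional on coordinates
    have hrep : ∀ m ∈ M, ∃ l : (Fin n → ℝ) →ₗ[ℝ] ℝ,
        ∑ j, l (Pi.single j 1) • (b j : C(B, ℝ)) = m ∧
        ∀ y, l (ψ y) = Real.sign (e y) * m y := by
      intro m hm
      let l : (Fin n → ℝ) →ₗ[ℝ] ℝ := ∑ j, b.repr ⟨m, hm⟩ j • LinearMap.proj j
      have hlm : ∑ j, l (Pi.single j 1) • b j = ⟨m, hm⟩ := by
        have hl : ∀ j, l (Pi.single j 1) = b.repr ⟨m, hm⟩ j := by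
          intro j
          simp [l, Pi.single_apply]
        simp only [hl]
        exact b.sum_repr _
      refine ⟨l, ?_, fun y => ?_⟩
      · simpa using congrArg (Subtype.val) hlm
      · rw [key l y, hlm]
    refine ⟨T.card, hT1, hT2, x, ?_, hxA, ⟨fun i => w (T.equivFin.symm i), ?_, ?_⟩, ?_⟩
    · intro i j hij
      apply T.equivFin.symm.injective
      apply Subtype.ext
      rw [← hxψ i, ← hxψ j, hij]
    · exact fun i => hw _ (T.equivFin.symm i).2
    · intro m hm
      obtain ⟨l, -, hl⟩ := hrep m hm
      have h1 := congrArg l hwsum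
      rw [map_sum, map_zero, ← Finset.sum_coe_sort, ← T.equivFin.symm.sum_comp] at h1
      rw [← h1]
      refine Finset.sum_congr rfl fun i _ => ?_
      rw [map_smul, ← hxψ i, hl, smul_eq_mul, hxψ i, mul_assoc]
    · intro m hm hm0
      obtain ⟨l, hlm, hl⟩ := hrep m hm
      have hl0 : l = 0 := by
        refine LinearMap.ext_on hTspan fun v hv => ?_
        have h1 := hxψ (T.equivFin ⟨v, hv⟩)
        rw [Equiv.symm_apply_apply] at h1
        simp only at h1
        rw [← h1, hl, hm0]
        simp
      rw [← hlm, hl0]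
      simp
  · rintro ⟨k, hk, -, x, -, hxA, ⟨lam, hlam, hsum⟩, hsep⟩
    obtain ⟨γ, hγ, hγle⟩ := exists_uniform_of_sum_eq_zero M (by omega : 0 < k) x
      (fun i => Real.sign (e (x i))) (fun i => by
        simpa [Real.sign_eq_zero_iff] using hsne _ (hxA i)) lam hlam hsum hsep
    refine ⟨γ, hγ, fun m hm => ?_⟩
    obtain ⟨i, hi⟩ := hγle (m - mstar) (M.sub_mem hm hmem)
    set g := m - mstar
    -- the norm of `e - g` is bounded below by its signed value at `x i`
    have h1 : |(e - g) (x i)| ≤ ‖e - g‖ := (e - g).norm_coe_le_norm (x i)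
    have h2 := hxA i
    rw [ContinuousMap.sub_apply] at h1
    rcases lt_or_gt_of_ne (hsne _ h2) with h | h
    · rw [Real.sign_of_neg h] at hi
      rw [abs_of_neg h] at h2
      have := neg_le_abs (e (x i) - g (x i))
      linarith
    · rw [Real.sign_of_pos h] at hi
      rw [abs_of_pos h] at h2
      have := le_abs_self (e (x i) - g (x i))
      linarith
end

section
/- Let B be a compact Hausdorff space, M a finite-dimensional subspace of C(B), f ∈ C(B), and m* ∈ M a best approximant to f from M. Then the following are equivalent: (I) there exists γ > 0 such that ‖f − m‖ − ‖f − m*‖ ≥ γ‖m − m*‖ for all m ∈ M; (II) there exists σ > 0 such that for every g ∈ C(B) and every best approximant m' ∈ M to g from M, ‖m* − m'‖ ≤ σ‖f − g‖. -/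
/-!
Replacing `f` by `f - m*` one may assume `m* = 0`; let `d = ‖f‖` and
`E = {x | f x ^ 2 = d ^ 2}`.

(I) ⇒ (II) is the triangle inequality, with `σ = 2 / γ`.

(II) ⇒ (I).  The case `d = 0` is trivial.  Let `d > 0` and suppose `u ∈ M` satisfies `f u ≥ 0` on
`E`.  Then `‖f - t u‖ ≤ d + o(t)` as `t ↓ 0` (`sq_sub_smul_le`), so the truncation `h` of `f - t u`
to `[-d, d]` lies within `o(t)` of `f - t u`.  Moreover `0` is a best approximant to `h`: Kolmogorov's
criterion for `f` can be satisfied at points of `E` where `u` vanishes (`exists_extremal_zero`), and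
there `h = f`.  Hence `t u` is a best approximant to `h + t u`, which is within `o(t)` of `f`, and (II)
forces `u = 0` (`eq_zero_of_lipschitz`).  Therefore every `u ≠ 0` in `M` has a point of `E` with
`f u < 0`, and compactness of the unit sphere of `M` makes this uniform, which is (I)
(`strong_unicity_of_forall`).
-/

namespace StrongUnicity

variable {B : Type*} [TopologicalSpace B] [CompactSpace B]

theorem sq_le_norm_sq (f : C(B, ℝ)) (x : B) : f x ^ 2 ≤ ‖f‖ ^ 2 := by
  have := f.norm_coe_le_norm x
  rw [Real.norm_eq_abs] at this
  rw [← sq_abs]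
  gcongr

/-- One-sided first-order expansion of the square of `‖f - t m‖`: only the values of `f m` on the
extremal set of `f` matter. -/
theorem sq_sub_smul_le (f m : C(B, ℝ)) (c : ℝ)
    (hc : ∀ x, f x ^ 2 = ‖f‖ ^ 2 → c < f x * m x) :
    ∃ t₀ : ℝ, 0 < t₀ ∧ ∀ t, 0 < t → t ≤ t₀ → ∀ x,
      (f x - t * m x) ^ 2 ≤ ‖f‖ ^ 2 - 2 * t * c + t ^ 2 * ‖m‖ ^ 2 := by
  have hK : IsCompact {x | f x * m x ≤ c} :=
    (isClosed_le (by fun_prop) continuous_const).isCompact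
  obtain ⟨η, hη, hη'⟩ := hK.exists_forall_le' (f := fun x => ‖f‖ ^ 2 - f x ^ 2) (a := 0)
    (by fun_prop) (by
      intro x hx
      have h1 := sq_le_norm_sq f x
      rcases h1.lt_or_eq with h | h
      · linarith
      · exact absurd (hc x h) (not_lt.2 hx))
  -- off the set where `f m > c` the gap `η` absorbs the linear term, of size at most `2 t D`
  set D : ℝ := ‖f‖ * ‖m‖ + |c| + 1 with hD
  have hDpos : 0 < D := by positivity
  refine ⟨η / (2 * D), by positivity, fun t ht htt x => ?_⟩
  have hm : t ^ 2 * m x ^ 2 ≤ t ^ 2 * ‖m‖ ^ 2 := by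
    have := sq_le_norm_sq m x
    gcongr
  have hf := sq_le_norm_sq f x
  by_cases hx : f x * m x ≤ c
  · have h1 := hη' x hx
    have h2 : t * (2 * D) ≤ η := (le_div_iff₀ (by positivity)).1 htt
    have h3 : |f x * m x| ≤ ‖f‖ * ‖m‖ := by
      rw [abs_mul]
      exact mul_le_mul (f.norm_coe_le_norm x) (m.norm_coe_le_norm x) (abs_nonneg _)
        (norm_nonneg _)
    have h4 := neg_abs_le (f x * m x)
    have h5 := le_abs_self c
    have h6 : t * (c - f x * m x) ≤ t * D := by
      apply mul_le_mul_of_nonneg_left _ ht.le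
      linarith
    nlinarith
  · push Not at hx
    have := mul_lt_mul_of_pos_left hx ht
    nlinarith

/-- The necessity half of Kolmogorov's criterion for `0` to be a best approximant. -/
theorem kolmogorov (M : Submodule ℝ C(B, ℝ)) (f : C(B, ℝ)) (hf : 0 < ‖f‖)
    (hbest : ∀ m ∈ M, ‖f‖ ≤ ‖f - m‖) (m : C(B, ℝ)) (hm : m ∈ M) :
    ∃ x, f x ^ 2 = ‖f‖ ^ 2 ∧ f x * m x ≤ 0 := by
  by_contra! hcon
  have hE : IsCompact {x | f x ^ 2 = ‖f‖ ^ 2} :=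
    (isClosed_eq (by fun_prop) continuous_const).isCompact
  obtain ⟨c', hc', hcE⟩ := hE.exists_forall_le' (f := fun x => f x * m x) (a := 0)
    (by fun_prop) hcon
  obtain ⟨t₀, ht₀, ht⟩ := sq_sub_smul_le f m (c' / 2)
    (fun x hx => lt_of_lt_of_le (by linarith) (hcE x hx))
  set t := min t₀ (c' / (2 * (‖m‖ ^ 2 + 1))) with htdef
  have htpos : 0 < t := lt_min ht₀ (by positivity)
  have h2 : t * (2 * (‖m‖ ^ 2 + 1)) ≤ c' := (le_div_iff₀ (by positivity)).1 (min_le_right _ _)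
  have hlt : ‖f - t • m‖ < ‖f‖ := by
    rw [ContinuousMap.norm_lt_iff _ hf]
    intro x
    rw [Real.norm_eq_abs]
    refine abs_lt_of_sq_lt_sq ?_ hf.le
    have := ht t htpos (min_le_left _ _) x
    simp only [ContinuousMap.sub_apply, ContinuousMap.smul_apply, smul_eq_mul]
    nlinarith [mul_le_mul_of_nonneg_left h2 htpos.le, sq_nonneg ‖m‖, mul_pos htpos hc',
      sq_nonneg (t * ‖m‖)]
  exact absurd (hbest _ (M.smul_mem t hm)) (not_le.2 hlt)

/-- If `f u ≥ 0` on the extremal set, the extremal points in Kolmogorov's criterion can be chosen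
among the zeros of `u`: apply the criterion to `m + K u` with `K` large. -/
theorem exists_extremal_zero (M : Submodule ℝ C(B, ℝ)) (f : C(B, ℝ)) (hf : 0 < ‖f‖)
    (hbest : ∀ m ∈ M, ‖f‖ ≤ ‖f - m‖) (u : C(B, ℝ)) (hu : u ∈ M)
    (hpos : ∀ x, f x ^ 2 = ‖f‖ ^ 2 → 0 ≤ f x * u x) (m : C(B, ℝ)) (hm : m ∈ M) :
    ∃ x, f x ^ 2 = ‖f‖ ^ 2 ∧ u x = 0 ∧ f x * m x ≤ 0 := by
  by_contra! hcon
  have hE : IsCompact {x | f x ^ 2 = ‖f‖ ^ 2 ∧ f x * m x ≤ 0} :=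
    ((isClosed_eq (f := fun x => f x ^ 2) (by fun_prop) continuous_const).inter
      (isClosed_le (f := fun x => f x * m x) (by fun_prop) continuous_const)).isCompact
  obtain ⟨δ, hδ, hδE⟩ := hE.exists_forall_le' (f := fun x => f x * u x) (a := 0)
    (by fun_prop) (by
      rintro x ⟨h1, h2⟩
      refine lt_of_le_of_ne (hpos x h1) fun h0 => ?_
      rcases mul_eq_zero.1 h0.symm with h | h
      · rw [h] at h1
        have : 0 < ‖f‖ ^ 2 := by positivity
        linarith
      · exact absurd (hcon x h1 h) (not_lt.2 h2))
  set K : ℝ := (‖f * m‖ + 1) / δ with hKdef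
  have hK : 0 < K := by positivity
  obtain ⟨x, hx, hle⟩ := kolmogorov M f hf hbest (m + K • u) (M.add_mem hm (M.smul_mem K hu))
  simp only [ContinuousMap.add_apply, ContinuousMap.smul_apply, smul_eq_mul] at hle
  by_cases h : f x * m x ≤ 0
  · have h1 := mul_le_mul_of_nonneg_left (hδE x ⟨hx, h⟩) hK.le
    have h2 : K * δ = ‖f * m‖ + 1 := by rw [hKdef]; field_simp
    have h3 := (f * m).norm_coe_le_norm x
    rw [Real.norm_eq_abs, ContinuousMap.mul_apply] at h3
    have h4 := neg_abs_le (f x * m x)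
    nlinarith
  · push Not at h
    have := mul_nonneg hK.le (hpos x hx)
    nlinarith

/-- Under the Lipschitz condition, a direction `u` along which `‖f - t u‖` grows only by `o(t)`
must vanish. -/
theorem eq_zero_of_lipschitz (M : Submodule ℝ C(B, ℝ)) (f : C(B, ℝ)) (hf : 0 < ‖f‖)
    (hbest : ∀ m ∈ M, ‖f‖ ≤ ‖f - m‖) (σ : ℝ) (hσ : 0 < σ)
    (hlip : ∀ g : C(B, ℝ), ∀ m' ∈ M, (∀ m ∈ M, ‖g - m'‖ ≤ ‖g - m‖) → ‖m'‖ ≤ σ * ‖f - g‖)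
    (u : C(B, ℝ)) (hu : u ∈ M)
    (hpos : ∀ x, f x ^ 2 = ‖f‖ ^ 2 → 0 ≤ f x * u x) : u = 0 := by
  by_contra hne
  have hun : 0 < ‖u‖ := norm_pos_iff.2 hne
  set d := ‖f‖ with hd
  -- `ε` and `t` are chosen so that the excess `(2 t ε + t² ‖u‖²) / (2 d)` is below `t ‖u‖ / σ`
  set ε : ℝ := d * ‖u‖ / (4 * σ) with hε
  have hεpos : 0 < ε := by positivity
  obtain ⟨t₀, ht₀, ht⟩ := sq_sub_smul_le f u (-ε)
    (fun x hx => lt_of_lt_of_le (by linarith) (hpos x hx))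
  set t := min t₀ (ε / ‖u‖ ^ 2) with htdef
  have htpos : 0 < t := lt_min ht₀ (by positivity)
  have h2 : t * ‖u‖ ^ 2 ≤ ε := (le_div_iff₀ (by positivity)).1 (min_le_right _ _)
  set e : ℝ := 3 * t * ε / (2 * d) with he
  have hepos : 0 < e := by positivity
  have hed : 2 * d * e = 3 * t * ε := by rw [he]; field_simp
  have hab : ∀ x, |f x - t * u x| ≤ d + e := by
    intro x
    refine abs_le_of_sq_le_sq ?_ (by positivity)
    have := ht t htpos (min_le_left _ _) x
    nlinarith [mul_le_mul_of_nonneg_left h2 htpos.le, sq_nonneg e]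
  let h : C(B, ℝ) :=
    ⟨fun x => max (-d) (min d (f x - t * u x)), by fun_prop⟩
  have hh : ∀ x, h x = max (-d) (min d (f x - t * u x)) := fun _ => rfl
  have hnorm : ‖h‖ ≤ d := by
    rw [ContinuousMap.norm_le _ hf.le]
    intro x
    rw [Real.norm_eq_abs, hh, abs_le]
    exact ⟨le_max_left _ _, max_le (by linarith) (min_le_left _ _)⟩
  have hdist : ‖f - (h + t • u)‖ ≤ e := by
    rw [ContinuousMap.norm_le _ hepos.le]
    intro x
    have := abs_le.1 (hab x)
    simp only [ContinuousMap.sub_apply, ContinuousMap.add_apply, ContinuousMap.smul_apply,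
      smul_eq_mul, Real.norm_eq_abs, hh]
    rw [abs_le]
    rcases le_total d (f x - t * u x) with h1 | h1
    · rw [min_eq_left h1, max_eq_right (by linarith)]
      constructor <;> linarith
    · rw [min_eq_right h1]
      rcases le_total (-d) (f x - t * u x) with h3 | h3
      · rw [max_eq_right h3]
        constructor <;> linarith
      · rw [max_eq_left h3]
        constructor <;> linarith
  have hbesth : ∀ m ∈ M, d ≤ ‖h - m‖ := by
    intro m hm
    obtain ⟨x, hx, hux, hmx⟩ := exists_extremal_zero M f hf hbest u hu hpos m hm
    have habs : |f x| = d := by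
      rw [← abs_of_pos hf]
      exact (sq_eq_sq_iff_abs_eq_abs _ _).1 hx
    have hhx : h x = f x := by
      have := abs_le.1 habs.le
      rw [hh, hux, mul_zero, sub_zero, min_eq_right this.2, max_eq_right this.1]
    refine le_trans ?_ ((h - m).norm_coe_le_norm x)
    rw [Real.norm_eq_abs, ContinuousMap.sub_apply, hhx]
    refine le_trans (le_abs_self d) (sq_le_sq.1 ?_)
    nlinarith [sq_nonneg (m x)]
  have hfin := hlip (h + t • u) (t • u) (M.smul_mem t hu) (by
    intro m hm
    have e1 : h + t • u - t • u = h := by abel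
    have e2 : h + t • u - m = h - (m - t • u) := by abel
    rw [e1, e2]
    exact hnorm.trans (hbesth _ (M.sub_mem hm (M.smul_mem t hu))))
  rw [norm_smul, Real.norm_eq_abs, abs_of_pos htpos] at hfin
  have h5 : t * ‖u‖ ≤ σ * e := hfin.trans (mul_le_mul_of_nonneg_left hdist hσ.le)
  have h6 : σ * e = 3 / 8 * (t * ‖u‖) := by
    rw [he, hε]; field_simp; ring
  nlinarith [mul_pos htpos hun]

/-- If no nonzero `u ∈ M` has `f u ≥ 0` on the extremal set, then `0` is a strongly unique best
approximant.  Otherwise normalised violations of strong uniqueness would accumulate at such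
a `u`. -/
theorem strong_unicity_of_forall (M : Submodule ℝ C(B, ℝ)) [FiniteDimensional ℝ M] (f : C(B, ℝ))
    (huniq : ∀ u ∈ M, (∀ x, f x ^ 2 = ‖f‖ ^ 2 → 0 ≤ f x * u x) → u = 0) :
    ∃ γ : ℝ, 0 < γ ∧ ∀ m ∈ M, γ * ‖m‖ ≤ ‖f - m‖ - ‖f‖ := by
  by_contra! hcon
  have : ProperSpace M := FiniteDimensional.proper ℝ M
  choose m hmM hm using fun n : ℕ => hcon (1 / ((n : ℝ) + 1)) (by positivity)
  have hm0 : ∀ n, 0 < ‖m n‖ := by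
    intro n
    refine norm_pos_iff.2 fun h0 => ?_
    have := hm n
    simp [h0] at this
  let v : ℕ → M := fun n => ‖m n‖⁻¹ • ⟨m n, hmM n⟩
  have hv : ∀ n, v n ∈ Metric.sphere (0 : M) 1 := by
    intro n
    rw [mem_sphere_zero_iff_norm]
    change ‖‖m n‖⁻¹ • m n‖ = 1
    rw [norm_smul, norm_inv, norm_norm]
    exact inv_mul_cancel₀ (hm0 n).ne'
  obtain ⟨u, husph, φ, hφ, hlim⟩ := (isCompact_sphere (0 : M) 1).tendsto_subseq hv
  have hu0 : (u : C(B, ℝ)) = 0 := by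
    refine huniq u u.2 fun x hx => ?_
    have hbound : ∀ n : ℕ, -(‖f‖ * (1 / ((n : ℝ) + 1))) ≤ f x * (v n : C(B, ℝ)) x := by
      intro n
      have h1 := hm n
      have h2 := (f - m n).norm_coe_le_norm x
      rw [Real.norm_eq_abs, ContinuousMap.sub_apply] at h2
      -- multiplying by `f x`, of absolute value `‖f‖`, avoids introducing the sign of `f x`
      have h3 : ‖f‖ ^ 2 - f x * m n x ≤ ‖f‖ * |f x - m n x| := by
        have habs : |f x| = ‖f‖ := by
          rw [← abs_of_nonneg (norm_nonneg f)]
          exact (sq_eq_sq_iff_abs_eq_abs _ _).1 hx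
        rw [← habs, ← abs_mul, habs, ← hx]
        refine le_trans (le_of_eq ?_) (le_abs_self _)
        ring
      have h4 : ‖f‖ * |f x - m n x| ≤ ‖f‖ * (‖f‖ + 1 / ((n : ℝ) + 1) * ‖m n‖) := by
        gcongr
        linarith
      have h5 : -(‖f‖ * (1 / ((n : ℝ) + 1))) * ‖m n‖ ≤ f x * m n x := by nlinarith
      have h6 : f x * (v n : C(B, ℝ)) x = f x * m n x / ‖m n‖ := by
        simp only [v, Submodule.coe_smul, ContinuousMap.smul_apply, smul_eq_mul]
        ring
      rw [h6, le_div_iff₀ (hm0 n)]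
      exact h5
    have hc : Continuous fun w : M => f x * (w : C(B, ℝ)) x :=
      continuous_const.mul ((continuous_eval_const x).comp continuous_subtype_val)
    have hl1 := (hc.tendsto u).comp hlim
    have hl2 : Filter.Tendsto (fun n : ℕ => -(‖f‖ * (1 / ((n : ℝ) + 1)))) Filter.atTop
        (nhds 0) := by
      simpa using ((tendsto_one_div_add_atTop_nhds_zero_nat (𝕜 := ℝ)).const_mul ‖f‖).neg
    exact le_of_tendsto_of_tendsto' (hl2.comp hφ.tendsto_atTop) hl1 fun n => hbound (φ n)
  rw [mem_sphere_zero_iff_norm] at husph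
  change ‖(u : C(B, ℝ))‖ = 1 at husph
  rw [hu0, norm_zero] at husph
  exact zero_ne_one husph

end StrongUnicity

/-- For a finite-dimensional subspace `M` of `C(B)`, `B` compact
Hausdorff, `f ∈ C(B)` and `m* ∈ M` a best approximant to `f`:  strong uniqueness at
`f` (I) is equivalent to local Lipschitz continuity of the best approximation
operator at `f` (II). -/
theorem stmt_7 {B : Type*} [TopologicalSpace B] [CompactSpace B] [T2Space B]
    (M : Submodule ℝ C(B, ℝ)) [FiniteDimensional ℝ M]
    (f : C(B, ℝ)) (mstar : C(B, ℝ)) (hmem : mstar ∈ M)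
    (hbest : ∀ m ∈ M, ‖f - mstar‖ ≤ ‖f - m‖) :
    (∃ γ : ℝ, 0 < γ ∧ ∀ m ∈ M, γ * ‖m - mstar‖ ≤ ‖f - m‖ - ‖f - mstar‖) ↔
    (∃ σ : ℝ, 0 < σ ∧ ∀ g : C(B, ℝ), ∀ m' ∈ M,
      (∀ m ∈ M, ‖g - m'‖ ≤ ‖g - m‖) → ‖mstar - m'‖ ≤ σ * ‖f - g‖) := by
  constructor
  · rintro ⟨γ, hγ, h⟩
    refine ⟨2 / γ, by positivity, fun g m' hm' hb => ?_⟩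
    have h1 := h m' hm'
    have h2 := hb mstar hmem
    have h3 : ‖f - m'‖ ≤ ‖f - g‖ + ‖g - m'‖ := norm_sub_le_norm_sub_add_norm_sub _ _ _
    have h4 : ‖g - mstar‖ ≤ ‖g - f‖ + ‖f - mstar‖ := norm_sub_le_norm_sub_add_norm_sub _ _ _
    rw [norm_sub_rev g f] at h4
    rw [norm_sub_rev mstar m', div_mul_eq_mul_div, le_div_iff₀ hγ]
    linarith
  · rintro ⟨σ, hσ, h⟩
    suffices H : ∃ γ : ℝ, 0 < γ ∧ ∀ m ∈ M, γ * ‖m‖ ≤ ‖(f - mstar) - m‖ - ‖f - mstar‖ by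
      obtain ⟨γ, hγ, H⟩ := H
      refine ⟨γ, hγ, fun m hm => ?_⟩
      have := H (m - mstar) (M.sub_mem hm hmem)
      rwa [sub_sub_sub_cancel_right] at this
    have hbest' : ∀ m ∈ M, ‖f - mstar‖ ≤ ‖(f - mstar) - m‖ := by
      intro m hm
      rw [sub_sub]
      exact hbest _ (M.add_mem hmem hm)
    rcases (norm_nonneg (f - mstar)).eq_or_lt with h0 | h0
    · refine ⟨1, one_pos, fun m _ => ?_⟩
      rw [norm_eq_zero.1 h0.symm]
      simp
    · refine StrongUnicity.strong_unicity_of_forall M (f - mstar) fun u hu hpos =>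
        StrongUnicity.eq_zero_of_lipschitz M (f - mstar) h0 hbest' σ hσ ?_ u hu hpos
      intro g m' hm' hb
      have := h (g + mstar) (m' + mstar) (M.add_mem hm' hmem) (by
        intro m hm
        have e1 : g + mstar - (m' + mstar) = g - m' := by abel
        have e2 : g + mstar - m = g - (m - mstar) := by abel
        rw [e1, e2]
        exact hb _ (M.sub_mem hm hmem))
      have e1 : mstar - (m' + mstar) = -m' := by abel
      have e2 : f - (g + mstar) = f - mstar - g := by abel
      rwa [e1, e2, norm_neg] at this
end

section
/- Let a < b, let n ≥ 1, and let M be an n-dimensional subspace of C[a,b] that is a T-space, i.e. no nonzero m ∈ M has n or more distinct zeros in [a,b]. Given f ∈ C[a,b], an element m* ∈ M is a best approximant to f from M in the uniform norm if and only if there exist points a ≤ x₁ < x₂ < ⋯ < x_{n+1} ≤ b and δ ∈ {−1, 1} such that (−1)^i · δ · (f − m*)(x_i) = ‖f − m*‖ for every i = 1, …, n+1. -/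
/-!
Write `e = f - mstar` and `N = ‖e‖`.

Sufficiency: if `e` takes the values `±N` with alternating signs at `n + 1` points and some `m ∈ M`
were strictly closer to `f`, then `m - mstar` would have the sign of `e` at each of these points,
hence `n` distinct zeros by the intermediate value theorem, which the T-space property forbids.

Necessity: let `E` be the compact set where `|e| = N`. If `0` were outside the convex hull of the
vectors `e x • (u k x)_k`, `x ∈ E`, with `u` a basis of `M`, a separating functional would be an
element `m ∈ M` with `e * m > 0` on `E`, and `mstar + t • m` would be a better approximant for
small `t > 0` (`exists_norm_sub_smul_lt`). So `∑ x ∈ S, c x * e x * m x = 0` for all `m ∈ M`, with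
positive weights `c` and, by Carathéodory, a set `S ⊆ E` of at most `n + 1` points
(`exists_annihilating_weights`). The T-space property forces `S` to have exactly `n + 1` points
(`card_annihilating`). For two consecutive points of `S`, some nonzero `m ∈ M` vanishes at the
other `n - 1`; it has no further zeros, so it keeps its sign between the two, and the relation
shows that `e` has opposite signs there (`mul_neg_of_consecutive`). This replaces the usual
argument with determinants.
-/

/-- The convex hull of a compact set in `ℝⁿ` is compact: by Carathéodory it is a continuous image of
the product of a simplex with finitely many copies of the set. -/
lemma isCompact_convexHull_pi {n : ℕ} {K : Set (Fin n → ℝ)} (hK : IsCompact K) :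
    IsCompact (convexHull ℝ K) := by
  rcases K.eq_empty_or_nonempty with rfl | ⟨k0, hk0⟩
  · simp
  have hc : IsCompact ((fun p : (Fin (n + 1) → ℝ) × (Fin (n + 1) → Fin n → ℝ) =>
      ∑ i, p.1 i • p.2 i) ''
      (stdSimplex ℝ (Fin (n + 1)) ×ˢ Set.pi Set.univ (fun _ => K))) := by
    refine ((isCompact_stdSimplex ℝ (Fin (n + 1))).prod
      (isCompact_univ_pi (fun _ => hK))).image ?_
    fun_prop
  convert hc using 1
  apply Set.Subset.antisymm
  · intro x hx
    obtain ⟨ι, _, z, w, hz, hai, hw, hw1, hx⟩ := eq_pos_convex_span_of_mem_convexHull hx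
    have hcard : Fintype.card ι ≤ n + 1 := by
      have h1 := hai.card_le_finrank_succ
      have h2 := Submodule.finrank_le (vectorSpan ℝ (Set.range z))
      simp only [Module.finrank_fin_fun] at h2
      omega
    obtain ⟨g⟩ : Nonempty (ι ↪ Fin (n + 1)) :=
      Function.Embedding.nonempty_of_card_le (by simpa using hcard)
    -- pad with zero weights at `k0` to reach exactly `n + 1` points
    refine ⟨(Function.extend g w 0, Function.extend g z (fun _ => k0)), ⟨⟨?_, ?_⟩, ?_⟩, ?_⟩
    · intro j
      by_cases h : ∃ i, g i = j
      · obtain ⟨i, rfl⟩ := h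
        simpa [g.injective.extend_apply] using (hw i).le
      · simp [Function.extend_apply' _ _ _ h]
    · rw [← hw1]
      refine (Fintype.sum_of_injective g g.injective _ _ ?_ ?_).symm
      · intro j hj
        exact Function.extend_apply' _ _ _ hj
      · intro i
        simp [g.injective.extend_apply]
    · intro j _
      by_cases h : ∃ i, g i = j
      · obtain ⟨i, rfl⟩ := h
        simpa [g.injective.extend_apply] using hz ⟨i, rfl⟩
      · simpa [Function.extend_apply' _ _ _ h] using hk0
    · rw [← hx]
      refine (Fintype.sum_of_injective g g.injective _ _ ?_ ?_).symm
      · intro j hj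
        simp [Function.extend_apply' _ _ _ hj]
      · intro i
        simp [g.injective.extend_apply]
  · rintro _ ⟨p, ⟨hp1, hp2⟩, rfl⟩
    exact (convex_convexHull ℝ K).sum_mem (fun i _ => hp1.1 i) hp1.2
      (fun i _ => subset_convexHull ℝ K (hp2 i trivial))

/-- Intermediate value theorem on the subtype `[a, b]`, with the zero strictly between. -/
lemma exists_zero_of_mul_neg {a b : ℝ} (g : C(↥(Set.Icc a b), ℝ))
    {x y : ↥(Set.Icc a b)} (hxy : x < y) (h : g x * g y < 0) :
    ∃ z, x < z ∧ z < y ∧ g z = 0 := by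
  have hab : a ≤ b := x.2.1.trans x.2.2
  have hx0 : g x ≠ 0 := by rintro h0; simp [h0] at h
  have hy0 : g y ≠ 0 := by rintro h0; simp [h0] at h
  have hcont : Continuous (fun t : ℝ => g (Set.projIcc a b hab t)) := by fun_prop
  have hmem : (0 : ℝ) ∈ Set.uIcc (g (Set.projIcc a b hab x)) (g (Set.projIcc a b hab y)) := by
    rw [Set.projIcc_val, Set.projIcc_val, Set.mem_uIcc]
    rcases mul_neg_iff.1 h with h | h
    · right; constructor <;> linarith [h.1, h.2]
    · left; constructor <;> linarith [h.1, h.2]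
  obtain ⟨t, ht, h0⟩ := intermediate_value_uIcc hcont.continuousOn hmem
  rw [Set.uIcc_of_le (show (x : ℝ) ≤ y from hxy.le)] at ht
  have htI : t ∈ Set.Icc a b := ⟨x.2.1.trans ht.1, ht.2.trans y.2.2⟩
  simp only [Set.projIcc_of_mem hab htI] at h0
  refine ⟨⟨t, htI⟩, lt_of_le_of_ne ht.1 ?_, lt_of_le_of_ne ht.2 ?_, h0⟩
  · rintro rfl; exact hx0 h0
  · rintro rfl; exact hy0 h0

/-- An `n`-dimensional space of functions has a nonzero element vanishing at any prescribed
points if there are fewer than `n` of them: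
the evaluations there form a linear map with nontrivial kernel. -/
lemma exists_ne_zero_vanishing {X : Type*} [TopologicalSpace X] {n : ℕ} (hn : 1 ≤ n)
    (M : Submodule ℝ C(X, ℝ)) (hdim : Module.finrank ℝ M = n) (T : Finset X) (hT : T.card < n) :
    ∃ m ∈ M, m ≠ 0 ∧ ∀ x ∈ T, m x = 0 := by
  have : FiniteDimensional ℝ M := Module.finite_of_finrank_pos (by omega)
  let φ : M →ₗ[ℝ] (T → ℝ) :=
    { toFun := fun m x => (m : C(X, ℝ)) x
      map_add' := fun _ _ => rfl
      map_smul' := fun _ _ => rfl }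
  have hk : LinearMap.ker φ ≠ ⊥ := LinearMap.ker_ne_bot_of_finrank_lt (by simp [hdim, hT])
  obtain ⟨m, hm, hm0⟩ := (Submodule.ne_bot_iff _).1 hk
  refine ⟨m, m.2, by simpa using hm0, fun x hx => ?_⟩
  exact congrFun (LinearMap.mem_ker.1 hm) ⟨x, hx⟩

/-- The T-space property, with zeros collected in a finset. -/
lemma eq_zero_of_card_le {X : Type*} [TopologicalSpace X] {n : ℕ} {M : Submodule ℝ C(X, ℝ)}
    (hT : ∀ m ∈ M, m ≠ 0 → ¬ ∃ x : Fin n → X, Function.Injective x ∧ ∀ i, m (x i) = 0)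
    {m : C(X, ℝ)} (hm : m ∈ M) (T : Finset X) (hc : n ≤ T.card) (h0 : ∀ x ∈ T, m x = 0) :
    m = 0 := by
  by_contra hne
  obtain ⟨T', hT', hc'⟩ := Finset.exists_subset_card_eq hc
  refine hT m hm hne ⟨fun i => (T'.equivFinOfCardEq hc').symm i, ?_, fun i => ?_⟩
  · exact Subtype.val_injective.comp (Equiv.injective _)
  · exact h0 _ (hT' (Subtype.prop _))

/-- If `m` has the sign of `e` wherever `|e|` is maximal, then moving `e` slightly in the direction
of `-m` lowers its norm. -/
lemma exists_norm_sub_smul_lt {X : Type*} [TopologicalSpace X] [CompactSpace X]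
    (e m : C(X, ℝ)) (he : 0 < ‖e‖) (h : ∀ x, |e x| = ‖e‖ → 0 < e x * m x) :
    ∃ t : ℝ, ‖e - t • m‖ < ‖e‖ := by
  have key : ∀ᶠ t : ℝ in nhds 0, ∀ x ∈ (Set.univ : Set X), 0 < t → |e x - t * m x| < ‖e‖ := by
    refine isCompact_univ.eventually_forall_of_forall_eventually
      (P := fun (t : ℝ) (x : X) => 0 < t → |e x - t * m x| < ‖e‖) fun x _ => ?_
    have hle : ∀ y, |e y| ≤ ‖e‖ := fun y => e.norm_coe_le_norm y
    rcases (hle x).lt_or_eq with hx | hx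
    · have hc : Continuous (fun z : ℝ × X => |e z.2 - z.1 * m z.2|) := by fun_prop
      have := hc.continuousAt.eventually_lt (continuousAt_const (x := ((0 : ℝ), x)) (y := ‖e‖))
        (by simpa using hx)
      filter_upwards [this] with z hz _ using hz
    · have hc : Continuous (fun z : ℝ × X => 2 * (e z.2 * m z.2) - z.1 * m z.2 ^ 2) := by fun_prop
      have := (continuousAt_const (x := ((0 : ℝ), x)) (y := (0 : ℝ))).eventually_lt hc.continuousAt
        (by simpa using h x hx)
      filter_upwards [this] with z hz ht
      -- `(e - t m)² = e² - t (2 e m - t m²)`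
      have h1 : e z.2 ^ 2 ≤ ‖e‖ ^ 2 := sq_le_sq' (neg_le_of_abs_le (hle _)) (le_of_abs_le (hle _))
      apply abs_lt_of_sq_lt_sq _ he.le
      nlinarith [mul_pos ht hz]
  obtain ⟨t, ht, htpos⟩ := ((key.filter_mono nhdsWithin_le_nhds).and
    (self_mem_nhdsWithin : Set.Ioi (0 : ℝ) ∈ nhdsWithin 0 (Set.Ioi 0))).exists
  refine ⟨t, (ContinuousMap.norm_lt_iff _ he).2 fun x => ?_⟩
  simpa using ht x trivial htpos

/-- For a best approximant with error `e`, a positive combination of at most `n + 1` evaluations at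
extremal points of `e`, signed by `e`, annihilates `M`. -/
lemma exists_annihilating_weights {X : Type*} [TopologicalSpace X] [CompactSpace X]
    {n : ℕ} (hn : 1 ≤ n) (M : Submodule ℝ C(X, ℝ)) (hdim : Module.finrank ℝ M = n)
    (e : C(X, ℝ)) (he : 0 < ‖e‖) (hbest : ∀ m ∈ M, ‖e‖ ≤ ‖e - m‖) :
    ∃ (S : Finset X) (c : X → ℝ), S.Nonempty ∧ S.card ≤ n + 1 ∧
      (∀ x ∈ S, 0 < c x ∧ |e x| = ‖e‖) ∧ ∀ m ∈ M, ∑ x ∈ S, c x * e x * m x = 0 := by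
  classical
  have : FiniteDimensional ℝ M := Module.finite_of_finrank_pos (by omega)
  let u : Module.Basis (Fin n) ℝ M := Module.finBasisOfFinrankEq ℝ M hdim
  let Φ : X → Fin n → ℝ := fun x k => e x * (u k : C(X, ℝ)) x
  have hΦ : Continuous Φ := by fun_prop
  have hE : IsCompact {x : X | |e x| = ‖e‖} :=
    (isClosed_eq (by fun_prop) continuous_const).isCompact
  have h0 : (0 : Fin n → ℝ) ∈ convexHull ℝ (Φ '' {x : X | |e x| = ‖e‖}) := by
    by_contra h0
    obtain ⟨g, r, hg0, hg⟩ := geometric_hahn_banach_point_closed (convex_convexHull ℝ _)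
      (isCompact_convexHull_pi (hE.image hΦ)).isClosed h0
    rw [map_zero] at hg0
    let m : M := ∑ k, g (Pi.single k 1) • u k
    have hm : ∀ x, g (Φ x) = e x * (m : C(X, ℝ)) x := by
      intro x
      have h1 : Φ x = ∑ k, Φ x k • (Pi.single k 1 : Fin n → ℝ) := by
        ext j
        simp [Finset.sum_apply, Pi.single_apply]
      rw [h1, map_sum]
      simp only [m, map_smul, Submodule.coe_sum, Submodule.coe_smul, ContinuousMap.coe_sum,
        Finset.sum_apply, ContinuousMap.coe_smul, Pi.smul_apply, smul_eq_mul, Finset.mul_sum, Φ]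
      exact Finset.sum_congr rfl fun k _ => by ring
    obtain ⟨t, ht⟩ := exists_norm_sub_smul_lt e m he fun x hx => by
      rw [← hm]
      exact hg0.trans (hg _ (subset_convexHull ℝ _ ⟨x, hx, rfl⟩))
    exact absurd (hbest _ (M.smul_mem t m.2)) (not_le.2 ht)
  obtain ⟨ι, _, z, w, hz, hai, hw, hw1, hsum⟩ := eq_pos_convex_span_of_mem_convexHull h0
  choose p hpE hpz using fun i => hz ⟨i, rfl⟩
  have hp : Function.Injective p := fun i j hij => hai.injective (by rw [← hpz, ← hpz, hij])
  have hcard : Fintype.card ι ≤ n + 1 := by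
    have h1 := hai.card_le_finrank_succ
    have h2 := Submodule.finrank_le (vectorSpan ℝ (Set.range z))
    simp only [Module.finrank_fin_fun] at h2
    omega
  refine ⟨Finset.univ.image p, Function.extend p w 0, ?_, ?_, ?_, ?_⟩
  · rw [Finset.image_nonempty, Finset.univ_nonempty_iff]
    by_contra hemp
    rw [not_nonempty_iff] at hemp
    simp at hw1
  · rwa [Finset.card_image_of_injective _ hp, Finset.card_univ]
  · intro x hx
    obtain ⟨i, -, rfl⟩ := Finset.mem_image.1 hx
    rw [hp.extend_apply]
    exact ⟨hw i, hpE i⟩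
  · intro m hm
    rw [Finset.sum_image fun i _ j _ hij => hp hij]
    simp only [hp.extend_apply]
    have hk : ∀ k, ∑ i, w i * (e (p i) * (u k : C(X, ℝ)) (p i)) = 0 := by
      intro k
      have := congrFun hsum k
      simpa [Finset.sum_apply, ← hpz, Φ] using this
    have hrep : ∀ x, m x = ∑ k, u.repr ⟨m, hm⟩ k * (u k : C(X, ℝ)) x := by
      intro x
      have := congrArg (fun q : M => (q : C(X, ℝ)) x) (u.sum_repr ⟨m, hm⟩)
      simp only [Submodule.coe_sum, Submodule.coe_smul, ContinuousMap.coe_sum, Finset.sum_apply,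
        ContinuousMap.coe_smul, Pi.smul_apply, smul_eq_mul] at this
      exact this.symm
    calc ∑ i, w i * e (p i) * m (p i)
        = ∑ k, u.repr ⟨m, hm⟩ k * ∑ i, w i * (e (p i) * (u k : C(X, ℝ)) (p i)) := by
          simp only [hrep, Finset.mul_sum]
          rw [Finset.sum_comm]
          exact Finset.sum_congr rfl fun k _ => Finset.sum_congr rfl fun i _ => by ring
      _ = 0 := by simp [hk]

/-- In a T-space, no combination of at most `n` evaluations with nonzero coefficients annihilates
`M`. -/
lemma card_annihilating {X : Type*} [TopologicalSpace X] [Infinite X]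
    {n : ℕ} (hn : 1 ≤ n) (M : Submodule ℝ C(X, ℝ)) (hdim : Module.finrank ℝ M = n)
    (hT : ∀ m ∈ M, m ≠ 0 → ¬ ∃ x : Fin n → X, Function.Injective x ∧ ∀ i, m (x i) = 0)
    (S : Finset X) (d : X → ℝ) (hS : S.Nonempty) (hd : ∀ x ∈ S, d x ≠ 0)
    (hsum : ∀ m ∈ M, ∑ x ∈ S, d x * m x = 0) : n < S.card := by
  classical
  by_contra hle
  obtain ⟨T, hST, hTc⟩ := Infinite.exists_superset_card_eq S n (not_lt.1 hle)
  obtain ⟨y, hy⟩ := hS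
  obtain ⟨m, hm, hm0, hmT⟩ := exists_ne_zero_vanishing hn M hdim (T.erase y)
    (by rw [Finset.card_erase_of_mem (hST hy)]; omega)
  have h := hsum m hm
  rw [Finset.sum_eq_single_of_mem y hy fun x hx hxy => by
    rw [hmT x (Finset.mem_erase.2 ⟨hxy, hST hx⟩), mul_zero]] at h
  have hmy : m y = 0 := (mul_eq_zero.1 h).resolve_left (hd y hy)
  refine hm0 (eq_zero_of_card_le hT hm T hTc.ge fun x hx => ?_)
  by_cases hxy : x = y
  · rw [hxy, hmy]
  · exact hmT x (Finset.mem_erase.2 ⟨hxy, hx⟩)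

/-- The coefficients of an annihilating combination of `n + 1` evaluations have opposite signs at
consecutive points. -/
lemma mul_neg_of_consecutive {a b : ℝ} {n : ℕ} (hn : 1 ≤ n)
    (M : Submodule ℝ C(↥(Set.Icc a b), ℝ)) (hdim : Module.finrank ℝ M = n)
    (hT : ∀ m ∈ M, m ≠ 0 →
      ¬ ∃ x : Fin n → ↥(Set.Icc a b), Function.Injective x ∧ ∀ i, m (x i) = 0)
    (S : Finset ↥(Set.Icc a b)) (hS : S.card = n + 1) (d : ↥(Set.Icc a b) → ℝ)
    (hd : ∀ x ∈ S, d x ≠ 0) (hsum : ∀ m ∈ M, ∑ x ∈ S, d x * m x = 0)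
    {y z : ↥(Set.Icc a b)} (hy : y ∈ S) (hz : z ∈ S) (hyz : y < z)
    (hcons : ∀ x ∈ S, ¬ (y < x ∧ x < z)) : d y * d z < 0 := by
  classical
  set T := (S.erase y).erase z with hTdef
  have hzy : z ∈ S.erase y := Finset.mem_erase.2 ⟨hyz.ne', hz⟩
  have hTc : T.card + 1 = n := by
    rw [hTdef, Finset.card_erase_of_mem hzy, Finset.card_erase_of_mem hy]; omega
  obtain ⟨m, hm, hm0, hmT⟩ := exists_ne_zero_vanishing hn M hdim T (by omega)
  have hnz : ∀ x ∉ T, m x ≠ 0 := by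
    intro x hx h0
    refine hm0 (eq_zero_of_card_le hT hm (insert x T) ?_ ?_)
    · rw [Finset.card_insert_of_notMem hx]; omega
    · intro w hw
      rcases Finset.mem_insert.1 hw with rfl | hw
      · exact h0
      · exact hmT w hw
  have hpos : 0 < m y * m z := by
    rcases lt_trichotomy (m y * m z) 0 with h | h | h
    · obtain ⟨x, h1, h2, h3⟩ := exists_zero_of_mul_neg m hyz h
      refine absurd h3 (hnz x fun hx => ?_)
      exact hcons x (Finset.mem_of_mem_erase (Finset.mem_of_mem_erase hx)) ⟨h1, h2⟩
    · exact absurd h (mul_ne_zero (hnz y (by simp [hTdef])) (hnz z (by simp [hTdef])))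
    · exact h
  have h := hsum m hm
  rw [← Finset.add_sum_erase _ _ hy, ← Finset.add_sum_erase _ _ hzy,
    Finset.sum_eq_zero fun x hx => by rw [hmT x hx, mul_zero], add_zero] at h
  have hdy : 0 < d y ^ 2 := by have := hd y hy; positivity
  -- multiplying `d y * m y = - d z * m z` by `d y * m z` gives
  have h2 : d y * d z * m z ^ 2 = - (d y ^ 2 * (m y * m z)) := by
    linear_combination (d y * m z) * h
  by_contra hge
  nlinarith [mul_nonneg (not_lt.1 hge) (sq_nonneg (m z)), mul_pos hdy hpos]

/-- An alternant of length `n + 1` for the error certifies a best approximant. -/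
lemma best_of_alternant {a b : ℝ} {n : ℕ} (M : Submodule ℝ C(↥(Set.Icc a b), ℝ))
    (hT : ∀ m ∈ M, m ≠ 0 →
      ¬ ∃ x : Fin n → ↥(Set.Icc a b), Function.Injective x ∧ ∀ i, m (x i) = 0)
    (e : C(↥(Set.Icc a b), ℝ)) (x : Fin (n + 1) → ↥(Set.Icc a b)) (hx : StrictMono x)
    (δ : ℝ) (hδ : δ = 1 ∨ δ = -1)
    (halt : ∀ i : Fin (n + 1), (-1 : ℝ) ^ (i : ℕ) * δ * e (x i) = ‖e‖)
    (p : C(↥(Set.Icc a b), ℝ)) (hp : p ∈ M) : ‖e‖ ≤ ‖e - p‖ := by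
  by_contra! hlt
  have hsign : ∀ i : Fin (n + 1), 0 < (-1 : ℝ) ^ (i : ℕ) * δ * p (x i) := by
    intro i
    have h1 : |(-1 : ℝ) ^ (i : ℕ) * δ| = 1 := by
      rcases hδ with rfl | rfl <;> simp
    have h2 : (-1 : ℝ) ^ (i : ℕ) * δ * (e - p) (x i) ≤ ‖e - p‖ := by
      refine (le_abs_self _).trans ?_
      rw [abs_mul, h1, one_mul]
      exact (e - p).norm_coe_le_norm (x i)
    rw [ContinuousMap.sub_apply, mul_sub, halt i] at h2
    linarith
  have hz : ∀ i : Fin n, ∃ z, x i.castSucc < z ∧ z < x i.succ ∧ p z = 0 := by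
    intro i
    refine exists_zero_of_mul_neg p (hx i.castSucc_lt_succ) ?_
    have h := mul_pos (hsign i.castSucc) (hsign i.succ)
    have h1 : ((-1 : ℝ) ^ (i : ℕ)) ^ 2 = 1 := by rw [← pow_mul, mul_comm, pow_mul]; simp
    have h2 : δ ^ 2 = 1 := by rcases hδ with rfl | rfl <;> norm_num
    simp only [Fin.val_castSucc, Fin.val_succ, pow_succ] at h
    linear_combination h - p (x i.castSucc) * p (x i.succ) * (((-1 : ℝ) ^ (i : ℕ)) ^ 2 * h2 + h1)
  choose z hz1 hz2 hz0 using hz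
  have hzmono : StrictMono z := by
    intro i j hij
    calc z i < x i.succ := hz2 i
      _ ≤ x j.castSucc := hx.monotone (Fin.succ_le_castSucc_iff.2 hij)
      _ < z j := hz1 j
  refine hT p hp ?_ ⟨z, hzmono.injective, hz0⟩
  rintro rfl
  simpa using hsign 0

/-- (Chebyshev alternation theorem.)  Let `M` be an `n`-dimensional
T-space in `C[a,b]` (no nonzero element has `n` distinct zeros), `n ≥ 1`.  Then
`m* ∈ M` is a best uniform approximant to `f` iff there are points
`a ≤ x₁ < ⋯ < x_{n+1} ≤ b` and `δ ∈ {−1, 1}` with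
`(−1)^i · δ · (f − m*)(xᵢ) = ‖f − m*‖` for `i = 1, …, n+1`. -/
theorem stmt_9 (a b : ℝ) (hab : a < b) (n : ℕ) (hn : 1 ≤ n)
    (M : Submodule ℝ C(↥(Set.Icc a b), ℝ)) (hdim : Module.finrank ℝ M = n)
    (hT : ∀ m ∈ M, m ≠ 0 →
      ¬ ∃ x : Fin n → ↥(Set.Icc a b), Function.Injective x ∧ ∀ i, m (x i) = 0)
    (f : C(↥(Set.Icc a b), ℝ)) (mstar : C(↥(Set.Icc a b), ℝ)) (hmem : mstar ∈ M) :
    (∀ m ∈ M, ‖f - mstar‖ ≤ ‖f - m‖) ↔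
    (∃ x : Fin (n + 1) → ↥(Set.Icc a b), StrictMono x ∧
      ∃ δ : ℝ, (δ = 1 ∨ δ = -1) ∧
        ∀ i : Fin (n + 1), (-1 : ℝ) ^ (i : ℕ) * δ * (f - mstar) (x i) = ‖f - mstar‖) := by
  have : Infinite ↥(Set.Icc a b) := Set.infinite_coe_iff.2 (Set.Icc_infinite hab)
  set e := f - mstar with he
  constructor
  · intro hbest
    rcases (norm_nonneg e).eq_or_lt with h0 | hpos
    · obtain ⟨S, hS⟩ := Infinite.exists_subset_card_eq ↥(Set.Icc a b) (n + 1)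
      have he0 : e = 0 := norm_eq_zero.1 h0.symm
      exact ⟨S.orderEmbOfFin hS, (S.orderEmbOfFin hS).strictMono, 1, Or.inl rfl,
        fun i => by simp [he0]⟩
    have hbest' : ∀ m ∈ M, ‖e‖ ≤ ‖e - m‖ := fun m hm => by
      have := hbest (mstar + m) (M.add_mem hmem hm)
      rwa [← sub_sub] at this
    obtain ⟨S, c, hSne, hSle, hc, hsum⟩ := exists_annihilating_weights hn M hdim e hpos hbest'
    have hd : ∀ x ∈ S, c x * e x ≠ 0 := fun x hx =>
      mul_ne_zero (hc x hx).1.ne' (abs_pos.1 ((hc x hx).2 ▸ hpos))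
    have hS : S.card = n + 1 :=
      le_antisymm hSle (card_annihilating hn M hdim hT S (fun x => c x * e x) hSne hd hsum)
    set x := S.orderEmbOfFin hS with hx
    have hxS : ∀ i, x i ∈ S := S.orderEmbOfFin_mem hS
    have hstep : ∀ i : Fin n, e (x i.succ) = - e (x i.castSucc) := by
      intro i
      have hneg := mul_neg_of_consecutive hn M hdim hT S hS (fun x => c x * e x) hd hsum
        (hxS i.castSucc) (hxS i.succ) (x.strictMono i.castSucc_lt_succ) (by
          intro y hy ⟨h1, h2⟩
          have hr : y ∈ Set.range x := by rw [hx, S.range_orderEmbOfFin hS]; exact hy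
          obtain ⟨j, rfl⟩ := hr
          have h3 := x.lt_iff_lt.1 h1
          have h4 := x.lt_iff_lt.1 h2
          simp only [Fin.lt_def, Fin.val_castSucc, Fin.val_succ] at h3 h4
          omega)
      have hcc := mul_pos (hc _ (hxS i.castSucc)).1 (hc _ (hxS i.succ)).1
      have hee : e (x i.castSucc) * e (x i.succ) < 0 := by
        by_contra hge
        nlinarith [mul_nonneg hcc.le (not_lt.1 hge)]
      have habs : |e (x i.succ)| = |e (x i.castSucc)| := by
        rw [(hc _ (hxS _)).2, (hc _ (hxS _)).2]
      rcases abs_eq_abs.1 habs with h | h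
      · rw [h] at hee
        exact absurd hee (not_lt.2 (mul_self_nonneg _))
      · exact h
    have hall : ∀ i : Fin (n + 1), (-1 : ℝ) ^ (i : ℕ) * e (x i) = e (x 0) := by
      intro i
      induction i using Fin.induction with
      | zero => simp
      | succ i ih =>
        rw [← ih, hstep, Fin.val_succ, Fin.val_castSucc, pow_succ]
        ring
    refine ⟨x, x.strictMono, ?_⟩
    rcases abs_eq (norm_nonneg e) |>.1 (hc _ (hxS 0)).2 with h | h
    · exact ⟨1, Or.inl rfl, fun i => by rw [mul_one, hall, h]⟩
    · exact ⟨-1, Or.inr rfl, fun i => by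
        linear_combination (-1 : ℝ) * hall i - h⟩
  · rintro ⟨x, hx, δ, hδ, halt⟩ m hm
    have := best_of_alternant M hT e x hx δ hδ halt (m - mstar) (M.sub_mem hm hmem)
    rwa [he, sub_sub_sub_cancel_right] at this
end

section
/- Let ν be a non-atomic σ-finite positive measure on a measurable space (K, Σ) and let M be a finite-dimensional subspace of the real space L¹(K, ν). Then the set of f ∈ L¹(K, ν) that have a strongly unique best approximant from M is dense in L¹(K, ν): for every f ∈ L¹(K, ν) and every ε > 0 there exist g ∈ L¹(K, ν) with ‖f − g‖₁ < ε, an element m* ∈ M and γ > 0 such that ‖g − m‖₁ − ‖g − m*‖₁ ≥ γ‖m − m*‖₁ for all m ∈ M. -/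
/-!
Subtracting a best approximant `p` to `f` from `M` (which exists since `M` is finite-dimensional)
reduces the theorem to the case where `0` is a best approximant to `f`. Then `first_order` gives
`∫ sgn f * m ≤ ∫_{f = 0} |m|` for all `m ∈ M`. The perturbation is `g = f` off `B` and `g = 0` on a
set `B` which carries approximately a small fraction `δ` of the integrals of `|f|` and of the
relevant functions built from `M`. By the subgradient inequality, `‖g - m‖ - ‖g‖ ≥ Φ m`, where
`Φ m = -∫ sgn g * m + ∫_{g = 0} |m|`. The first term is about `(1 - δ)` times that of `f`, whereas
`∫_{g = 0} |m|` is about `(1 - δ) ∫_{f = 0} |m| + δ ‖m‖`. Hence `Φ m` is about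
`(1 - δ) (∫_{f = 0} |m| - ∫ sgn f * m) + δ ‖m‖ ≥ δ ‖m‖`, and `γ = δ / 2` leaves room for the errors.

The errors are uniform because `Φ` is positively homogeneous and `1`-Lipschitz, so that only a
finite net of the unit sphere of `M` has to be controlled. For finitely many functions the set `B`
comes from an approximate form of Lyapunov's convexity theorem (`exists_approx`), deduced from
Sierpiński's theorem on the values of a non-atomic measure (`exists_measure_eq`).
-/

open MeasureTheory
open scoped ENNReal Topology
open Filter

/-- A non-atomic measure takes arbitrarily small positive values on subsets of a set `s` of finite
positive measure: a proper subset and its complement split the mass of `s`, so one of them has at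
most half of it, and this can be iterated. -/
lemma exists_small {K : Type*} [MeasurableSpace K] (ν : Measure K)
    (hna : ∀ s : Set K, MeasurableSet s → 0 < ν s →
      ∃ t ⊆ s, MeasurableSet t ∧ 0 < ν t ∧ ν t < ν s)
    {s : Set K} (hs : MeasurableSet s) (h0 : 0 < ν s) (hfin : ν s ≠ ∞)
    {ε : ℝ≥0∞} (hε : 0 < ε) :
    ∃ t ⊆ s, MeasurableSet t ∧ 0 < ν t ∧ ν t ≤ ε := by
  have key : ∀ n : ℕ, ∃ t ⊆ s, MeasurableSet t ∧ 0 < ν t ∧ ν t ≤ (2⁻¹ : ℝ≥0∞) ^ n * ν s := by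
    intro n
    induction n with
    | zero => exact ⟨s, subset_rfl, hs, h0, by simp⟩
    | succ n ih =>
      obtain ⟨t, hts, ht, ht0, htn⟩ := ih
      obtain ⟨r, hrt, hr, hr0, hrlt⟩ := hna t ht ht0
      have hsum : ν r + ν (t \ r) = ν t := by
        rw [← measure_inter_add_sdiff t hr, Set.inter_eq_self_of_subset_right hrt]
      have hhalf : ∀ a : Set K, 2 * ν a ≤ ν t → ν a ≤ (2⁻¹ : ℝ≥0∞) ^ (n + 1) * ν s := by
        intro a ha
        have h1 : ν a = 2⁻¹ * (2 * ν a) := by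
          rw [← mul_assoc, ENNReal.inv_mul_cancel (by simp) (by simp), one_mul]
        rw [h1, pow_succ', mul_assoc]
        exact mul_le_mul_right (ha.trans htn) _
      rcases le_total (ν r) (ν (t \ r)) with h | h
      · refine ⟨r, hrt.trans hts, hr, hr0, hhalf r ?_⟩
        rw [two_mul, ← hsum]
        gcongr
      · refine ⟨t \ r, Set.sdiff_subset.trans hts, ht.diff hr, ?_, hhalf _ ?_⟩
        · rw [pos_iff_ne_zero]
          intro h'
          rw [h', add_zero] at hsum
          exact hrlt.ne hsum
        · rw [two_mul, ← hsum]
          gcongr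
  have hlim : Tendsto (fun n : ℕ => (2⁻¹ : ℝ≥0∞) ^ n * ν s) atTop (𝓝 0) := by
    have := ENNReal.Tendsto.mul_const (b := ν s)
      (ENNReal.tendsto_pow_atTop_nhds_zero_of_lt_one (r := 2⁻¹) (by simp)) (Or.inr hfin)
    simpa using this
  obtain ⟨n, hn⟩ := (hlim.eventually (gt_mem_nhds hε)).exists
  obtain ⟨t, h1, h2, h3, h4⟩ := key n
  exact ⟨t, h1, h2, h3, h4.trans hn.le⟩

/-- Greedy step for Sierpiński's theorem: `a` can be enlarged inside `s`, without exceeding the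
measure `τ`, by at least half the measure of any other admissible enlargement `c`. The inequality
`ν c ≤ 2 (ν b - ν a)` is written without subtraction. -/
lemma exists_greedy {K : Type*} [MeasurableSpace K] (ν : Measure K)
    {s : Set K} (hfin : ν s ≠ ∞) {τ : ℝ≥0∞}
    {a : Set K} (ha : MeasurableSet a) (has : a ⊆ s) (haτ : ν a ≤ τ) :
    ∃ b, MeasurableSet b ∧ b ⊆ s ∧ ν b ≤ τ ∧ a ⊆ b ∧
      ∀ c ⊆ s \ a, MeasurableSet c → ν a + ν c ≤ τ → ν c + 2 * ν a ≤ 2 * ν b := by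
  set P : Set ℝ≥0∞ := {x | ∃ c ⊆ s \ a, MeasurableSet c ∧ ν a + ν c ≤ τ ∧ ν c = x} with hP
  have hUfin : sSup P ≠ ∞ := by
    refine ne_top_of_le_ne_top hfin (sSup_le ?_)
    rintro x ⟨c, hc, -, -, rfl⟩
    exact measure_mono (hc.trans Set.sdiff_subset)
  obtain ⟨c, hc, hcm, hcτ, hcU⟩ :
      ∃ c ⊆ s \ a, MeasurableSet c ∧ ν a + ν c ≤ τ ∧ sSup P ≤ 2 * ν c := by
    rcases eq_or_ne (sSup P) 0 with h | h
    · exact ⟨∅, by simp, MeasurableSet.empty, by simpa using haτ, by simp [h]⟩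
    · obtain ⟨x, ⟨c, h1, h2, h3, rfl⟩, hx⟩ := lt_sSup_iff.1 (ENNReal.half_lt_self h hUfin)
      refine ⟨c, h1, h2, h3, ?_⟩
      have := (ENNReal.div_le_iff (by simp) (by simp)).1 hx.le
      rwa [mul_comm]
  have hdis : Disjoint a c := by
    rw [Set.disjoint_left]
    exact fun x hx hx' => (hc hx').2 hx
  refine ⟨a ∪ c, ha.union hcm, Set.union_subset has (hc.trans Set.sdiff_subset), ?_,
    Set.subset_union_left, ?_⟩
  · rwa [measure_union hdis hcm]
  · intro d hd hdm hdτ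
    rw [measure_union hdis hcm, mul_add, add_comm]
    gcongr
    exact (le_sSup (show ν d ∈ P from ⟨d, hd, hdm, hdτ, rfl⟩)).trans hcU

/-- Sierpiński's theorem: a non-atomic measure takes every value `τ ≤ ν s` on the measurable
subsets of a set `s` of finite measure. The union of a greedy sequence has measure `τ`, since
otherwise some fixed set of positive measure would be admissible at every step, while the
increments tend to zero. -/
lemma exists_measure_eq {K : Type*} [MeasurableSpace K] (ν : Measure K)
    (hna : ∀ s : Set K, MeasurableSet s → 0 < ν s →
      ∃ t ⊆ s, MeasurableSet t ∧ 0 < ν t ∧ ν t < ν s)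
    {s : Set K} (hs : MeasurableSet s) (hfin : ν s ≠ ∞) {τ : ℝ≥0∞} (hτ : τ ≤ ν s) :
    ∃ t ⊆ s, MeasurableSet t ∧ ν t = τ := by
  let G := {a : Set K // MeasurableSet a ∧ a ⊆ s ∧ ν a ≤ τ}
  have step : ∀ a : G, ∃ b : G, a.1 ⊆ b.1 ∧
      ∀ c ⊆ s \ a.1, MeasurableSet c → ν a.1 + ν c ≤ τ → ν c + 2 * ν a.1 ≤ 2 * ν b.1 := by
    rintro ⟨a, h1, h2, h3⟩
    obtain ⟨b, g1, g2, g3, g4, g5⟩ := exists_greedy ν hfin h1 h2 h3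
    exact ⟨⟨b, g1, g2, g3⟩, g4, g5⟩
  choose N hN1 hN2 using step
  let A : ℕ → G := fun n => N^[n] ⟨∅, MeasurableSet.empty, by simp, by simp⟩
  have hA : ∀ n, A (n + 1) = N (A n) := fun n => Function.iterate_succ_apply' N n _
  have hmono : Monotone fun n => (A n).1 := monotone_nat_of_le_succ fun n => by
    rw [hA]; exact hN1 _
  have hsub : (⋃ n, (A n).1) ⊆ s := Set.iUnion_subset fun n => (A n).2.2.1
  have hlim : Tendsto (fun n => ν (A n).1) atTop (𝓝 (ν (⋃ n, (A n).1))) :=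
    tendsto_measure_iUnion_atTop hmono
  have hle : ν (⋃ n, (A n).1) ≤ τ := le_of_tendsto' hlim fun n => (A n).2.2.2
  have hm : MeasurableSet (⋃ n, (A n).1) := MeasurableSet.iUnion fun n => (A n).2.1
  have hUfin : ν (⋃ n, (A n).1) ≠ ∞ := ne_top_of_le_ne_top hfin (measure_mono hsub)
  refine ⟨_, hsub, hm, hle.antisymm ?_⟩
  by_contra! hlt
  have hpos : 0 < ν (s \ ⋃ n, (A n).1) := by
    rw [measure_sdiff hsub hm.nullMeasurableSet hUfin]
    exact tsub_pos_of_lt (hlt.trans_le hτ)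
  obtain ⟨c, hc, hcm, hc0, hcτ⟩ := exists_small ν hna (hs.diff hm) hpos
    (ne_top_of_le_ne_top hfin (measure_mono Set.sdiff_subset)) (tsub_pos_of_lt hlt)
  have hineq : ∀ n, ν c + 2 * ν (A n).1 ≤ 2 * ν (A (n + 1)).1 := by
    intro n
    rw [hA]
    refine hN2 _ c (fun x hx => ⟨(hc hx).1, fun h => (hc hx).2 (Set.mem_iUnion_of_mem n h)⟩) hcm ?_
    calc ν (A n).1 + ν c ≤ ν (⋃ n, (A n).1) + (τ - ν (⋃ n, (A n).1)) := by
          gcongr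
          exact Set.subset_iUnion (fun n => (A n).1) n
      _ = τ := add_tsub_cancel_of_le hle
  have h2 := le_of_tendsto_of_tendsto'
    (tendsto_const_nhds.add (ENNReal.Tendsto.const_mul hlim (Or.inr (by simp))))
    (ENNReal.Tendsto.const_mul ((tendsto_add_atTop_iff_nat 1).2 hlim)
      (Or.inr (by simp : (2 : ℝ≥0∞) ≠ ∞))) hineq
  have h3 : ν c + 2 * ν (⋃ n, (A n).1) ≤ 0 + 2 * ν (⋃ n, (A n).1) := by simpa using h2
  exact hc0.not_ge ((ENNReal.add_le_add_iff_right (ENNReal.mul_ne_top (by simp) hUfin)).1 h3)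

/-- Approximate Lyapunov theorem: for finitely many integrable functions there is one set `B` on
which each of them has approximately the fraction `δ` of its integral. The functions are the
coordinates of a vector-valued `F`; for a simple function `s` close to `F` in `L¹`, taking exactly
the fraction `δ` of every level set of `s` gives `∫ x in B, s x = δ • ∫ x, s x`. -/
lemma exists_approx {K : Type*} [MeasurableSpace K] (ν : Measure K)
    (hna : ∀ s : Set K, MeasurableSet s → 0 < ν s →
      ∃ t ⊆ s, MeasurableSet t ∧ 0 < ν t ∧ ν t < ν s)
    {H : Set (K → ℝ)} (hH : H.Finite) (hint : ∀ h ∈ H, Integrable h ν)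
    {δ η : ℝ} (hδ0 : 0 ≤ δ) (hδ1 : δ ≤ 1) (hη : 0 < η) :
    ∃ B, MeasurableSet B ∧ ∀ h ∈ H, |∫ x in B, h x ∂ν - δ * ∫ x, h x ∂ν| ≤ η := by
  have : Fintype H := hH.fintype
  let F : K → (H → ℝ) := fun x h => h.1 x
  have hF : Integrable F ν := Integrable.of_eval fun h => hint h.1 h.2
  obtain ⟨s, hs, hsm⟩ := (memLp_one_iff_integrable.2 hF).exists_simpleFunc_eLpNorm_sub_lt (by simp)
    (ε := ENNReal.ofReal (η / 2)) (by simpa using hη)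
  have hsint : Integrable s ν := memLp_one_iff_integrable.1 hsm
  have hdist : ∫ x, ‖F x - s x‖ ∂ν ≤ η / 2 := by
    rw [integral_norm_eq_lintegral_enorm (f := fun x => F x - s x)
      (hF.sub hsint).aestronglyMeasurable]
    rw [eLpNorm_one_eq_lintegral_enorm] at hs
    exact ENNReal.toReal_le_of_le_ofReal (by positivity) hs.le
  have hpiece : ∀ y : H → ℝ, ∃ t ⊆ s ⁻¹' {y}, MeasurableSet t ∧
      (y ≠ 0 → ν t = ENNReal.ofReal δ * ν (s ⁻¹' {y})) := by
    intro y
    by_cases hy : y = 0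
    · exact ⟨∅, by simp, MeasurableSet.empty, fun h => absurd hy h⟩
    · obtain ⟨t, h1, h2, h3⟩ := exists_measure_eq ν hna (s.measurableSet_preimage {y})
        (SimpleFunc.measure_preimage_lt_top_of_integrable s hsint hy).ne
        (τ := ENNReal.ofReal δ * ν (s ⁻¹' {y}))
        (mul_le_of_le_one_left zero_le (by simpa using hδ1))
      exact ⟨t, h1, h2, fun _ => h3⟩
  choose t ht1 ht2 ht3 using hpiece
  have hBm : MeasurableSet (⋃ y ∈ s.range, t y) := s.range.measurableSet_biUnion fun y _ => ht2 y
  set B := ⋃ y ∈ s.range, t y with hB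
  have hBy : ∀ y ∈ s.range, s ⁻¹' {y} ∩ B = t y := by
    intro y hy
    ext x
    simp only [hB, Set.mem_inter_iff, Set.mem_iUnion, Set.mem_preimage, Set.mem_singleton_iff]
    constructor
    · rintro ⟨hx, z, hz, hxz⟩
      have : s x = z := ht1 z hxz
      rwa [← hx, this]
    · exact fun hx => ⟨ht1 y hx, y, hy, hx⟩
  have hsB : ∫ x in B, s x ∂ν = δ • ∫ x, s x ∂ν := by
    rw [← SimpleFunc.integral_eq_integral _ hsint,
      ← SimpleFunc.integral_eq_integral _ hsint.integrableOn, SimpleFunc.integral_eq,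
      SimpleFunc.integral_eq, Finset.smul_sum]
    refine Finset.sum_congr rfl fun y hy => ?_
    by_cases hy0 : y = 0
    · simp [hy0]
    · rw [measureReal_restrict_apply (s.measurableSet_preimage _), hBy y hy, measureReal_def,
        ht3 y hy0, ENNReal.toReal_mul, ENNReal.toReal_ofReal hδ0, smul_smul, measureReal_def]
  refine ⟨B, hBm, fun h hh => ?_⟩
  have hG : Integrable (fun x => F x - s x) ν := hF.sub hsint
  have e1 : ∫ x in B, F x ∂ν - δ • ∫ x, F x ∂ν
      = ∫ x in B, (F x - s x) ∂ν - δ • ∫ x, (F x - s x) ∂ν := by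
    rw [integral_sub hF.integrableOn hsint.integrableOn, integral_sub hF hsint, hsB, smul_sub]
    abel
  have e2 : ‖∫ x in B, F x ∂ν - δ • ∫ x, F x ∂ν‖ ≤ η := by
    rw [e1]
    have a1 : ‖∫ x in B, (F x - s x) ∂ν‖ ≤ η / 2 :=
      (norm_integral_le_integral_norm _).trans
        ((setIntegral_le_integral hG.norm (ae_of_all _ fun x => norm_nonneg _)).trans hdist)
    have a2 : ‖δ • ∫ x, (F x - s x) ∂ν‖ ≤ η / 2 := by
      rw [norm_smul, Real.norm_of_nonneg hδ0]
      exact (mul_le_of_le_one_left (norm_nonneg _) hδ1).trans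
        ((norm_integral_le_integral_norm _).trans hdist)
    exact (norm_sub_le _ _).trans (by linarith)
  have e3 := (norm_le_pi_norm _ (⟨h, hh⟩ : H)).trans e2
  rw [Real.norm_eq_abs, Pi.sub_apply, Pi.smul_apply, smul_eq_mul,
    eval_integral (f := F) (fun i => (hint i.1 i.2).integrableOn),
    eval_integral (f := F) (fun i => hint i.1 i.2)] at e3
  exact e3

/-- The sign of a real number, with `sgn 0 = 0` because `0 / 0 = 0`. -/
noncomputable def sgn (a : ℝ) : ℝ := a / |a|

lemma sgn_zero : sgn 0 = 0 := by simp [sgn]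

lemma sgn_pos {a : ℝ} (h : 0 < a) : sgn a = 1 := by
  rw [sgn, abs_of_pos h, div_self h.ne']

lemma sgn_neg {a : ℝ} (h : a < 0) : sgn a = -1 := by
  rw [sgn, abs_of_neg h, div_neg, div_self h.ne]

lemma abs_sgn_le (a : ℝ) : |sgn a| ≤ 1 := by
  rcases lt_trichotomy a 0 with h | rfl | h
  · simp [sgn_neg h]
  · simp [sgn_zero]
  · simp [sgn_pos h]

lemma measurable_sgn : Measurable sgn := by
  unfold sgn
  fun_prop

/-- Subgradient inequality for `b ↦ |a - b|` at `b = 0`, including the kink at `a = 0`. -/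
lemma le_abs_sub_sub_abs (a b : ℝ) :
    -sgn a * b + (1 - |sgn a|) * |b| ≤ |a - b| - |a| := by
  rcases lt_trichotomy a 0 with h | rfl | h
  · rw [sgn_neg h, abs_of_neg h]
    simp
    linarith [neg_le_abs (a - b)]
  · simp [sgn_zero]
  · rw [sgn_pos h, abs_of_pos h]
    simp
    linarith [le_abs_self (a - b)]

/-- First-order condition for `0` to be a best `L¹` approximant to `f` from the line through `m`.
As `|sgn (f x)|` is the indicator of `f ≠ 0`, it reads `∫ sgn f * m ≤ ∫_{f = 0} |m|`. -/
lemma first_order {K : Type*} [MeasurableSpace K] (ν : Measure K)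
    {f m : K → ℝ} (hf : Integrable f ν) (hm : Integrable m ν)
    (hopt : ∀ t : ℝ, ∫ x, |f x| ∂ν ≤ ∫ x, |f x - t * m x| ∂ν) :
    0 ≤ ∫ x, (|m x| - |sgn (f x)| * |m x| - sgn (f x) * m x) ∂ν := by
  -- The difference quotients of `t ↦ ‖f - t m‖` at `t = 1 / (n + 1)` are nonnegative after
  -- integration and are dominated by `|m|`.
  have hlim : Tendsto (fun n : ℕ => ∫ x, ((n : ℝ) + 1) * (|f x - 1 / ((n : ℝ) + 1) * m x| - |f x|) ∂ν)
      atTop (𝓝 (∫ x, (|m x| - |sgn (f x)| * |m x| - sgn (f x) * m x) ∂ν)) := by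
    refine tendsto_integral_of_dominated_convergence (fun x => |m x|) (fun n => ?_) hm.abs
      (fun n => ae_of_all _ fun x => ?_) (ae_of_all _ fun x => ?_)
    · exact (((hf.sub (hm.const_mul _)).abs.sub hf.abs).const_mul _).aestronglyMeasurable
    · have hn : (0 : ℝ) < (n : ℝ) + 1 := by positivity
      rw [Real.norm_eq_abs, abs_mul, abs_of_pos hn]
      have h1 := abs_abs_sub_abs_le_abs_sub (f x - 1 / ((n : ℝ) + 1) * m x) (f x)
      have h2 : |f x - 1 / ((n : ℝ) + 1) * m x - f x| = |m x| / (n + 1) := by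
        rw [sub_sub_cancel_left, abs_neg, abs_mul, abs_of_pos (by positivity)]
        ring
      rw [h2, le_div_iff₀ hn] at h1
      linarith
    · have h0 : Tendsto (fun n : ℕ => 1 / ((n : ℝ) + 1) * |m x|) atTop (𝓝 0) := by
        simpa using tendsto_one_div_add_atTop_nhds_zero_nat.mul_const |m x|
      refine tendsto_const_nhds.congr' ?_
      rcases eq_or_ne (f x) 0 with hx | hx
      · refine Eventually.of_forall fun n => ?_
        have hn : (0 : ℝ) < (n : ℝ) + 1 := by positivity
        simp only [hx, sgn_zero, abs_zero, zero_sub, abs_neg, abs_mul, zero_mul, sub_zero]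
        rw [abs_of_pos (by positivity : 0 < 1 / ((n : ℝ) + 1))]
        field_simp
      -- Where `f x ≠ 0`, the sign of `f x - t * m x` is that of `f x` once `t * |m x| < |f x|`.
      · filter_upwards [h0.eventually (gt_mem_nhds (abs_pos.2 hx))] with n hn
        have hn0 : (0 : ℝ) < (n : ℝ) + 1 := by positivity
        have hle : |1 / ((n : ℝ) + 1) * m x| < |f x| := by
          rwa [abs_mul, abs_of_pos (by positivity : 0 < 1 / ((n : ℝ) + 1))]
        have hc : ((n : ℝ) + 1) * (1 / ((n : ℝ) + 1) * m x) = m x := by field_simp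
        generalize 1 / ((n : ℝ) + 1) * m x = u at hle hc
        have h2 := abs_lt.1 hle
        rcases hx.lt_or_gt with hx | hx
        · rw [abs_of_neg hx] at h2 ⊢
          rw [abs_of_neg (by linarith : f x - u < 0), sgn_neg hx, ← hc]
          simp
        · rw [abs_of_pos hx] at h2 ⊢
          rw [abs_of_pos (by linarith : 0 < f x - u), sgn_pos hx, ← hc]
          simp
  refine ge_of_tendsto' hlim fun n => ?_
  have i1 : Integrable (fun x => |f x - 1 / ((n : ℝ) + 1) * m x|) ν :=
    (hf.sub (hm.const_mul _)).abs
  rw [integral_const_mul, integral_sub i1 hf.abs]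
  have := hopt (1 / ((n : ℝ) + 1))
  exact mul_nonneg (by positivity) (by simpa using this)

/-- The case in which `0` is a best approximant: then `0` is the strongly unique best approximant to
an arbitrarily small perturbation `g` of `f`, obtained by setting `f` to zero on a suitable set. -/
lemma exists_of_zero_best {K : Type*} [MeasurableSpace K] (ν : Measure K)
    (hna : ∀ s : Set K, MeasurableSet s → 0 < ν s →
      ∃ t ⊆ s, MeasurableSet t ∧ 0 < ν t ∧ ν t < ν s)
    (M : Submodule ℝ (Lp ℝ 1 ν)) [FiniteDimensional ℝ M]
    (f : Lp ℝ 1 ν) (hopt : ∀ m ∈ M, ‖f‖ ≤ ‖f - m‖) (ε : ℝ) (hε : 0 < ε) :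
    ∃ g : Lp ℝ 1 ν, ‖f - g‖ < ε ∧
      ∃ γ : ℝ, 0 < γ ∧ ∀ m ∈ M, γ * ‖m‖ ≤ ‖g - m‖ - ‖g‖ := by
  have hf : Integrable f ν := L1.integrable_coeFn f
  have hM : ∀ m : Lp ℝ 1 ν, Integrable m ν := fun m => L1.integrable_coeFn m
  have hnorm : ∀ m : Lp ℝ 1 ν, ‖m‖ = ∫ x, |m x| ∂ν := fun m => L1.norm_eq_integral_norm m
  have hnorm_sub : ∀ m m' : Lp ℝ 1 ν, ‖m - m'‖ = ∫ x, |m x - m' x| ∂ν := by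
    intro m m'
    rw [hnorm]
    refine integral_congr_ae ?_
    filter_upwards [Lp.coeFn_sub m m'] with x hx
    rw [hx, Pi.sub_apply]
  obtain ⟨δ, hδ0, hδ1, hδε⟩ : ∃ δ : ℝ, 0 < δ ∧ δ ≤ 1 ∧ δ * (‖f‖ + 1) ≤ ε / 2 := by
    have hp : 0 < ‖f‖ + 1 := by positivity
    refine ⟨min 1 (ε / 2 / (‖f‖ + 1)), lt_min one_pos (by positivity), min_le_left _ _, ?_⟩
    rw [← le_div_iff₀ hp]
    exact min_le_right _ _
  set s : K → ℝ := fun x => sgn (f x) with hs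
  have hsm : AEStronglyMeasurable s ν :=
    (measurable_sgn.comp_aemeasurable hf.aemeasurable).aestronglyMeasurable
  have hs1 : ∀ x, |s x| ≤ 1 := fun x => abs_sgn_le _
  have hsM : ∀ m : Lp ℝ 1 ν, Integrable (fun x => s x * m x) ν := fun m =>
    (hM m).bdd_mul hsm (ae_of_all _ hs1)
  have hsaM : ∀ m : Lp ℝ 1 ν, Integrable (fun x => |s x| * |m x|) ν := fun m => by
    simpa only [abs_mul] using (hsM m).abs
  have hfo : ∀ m ∈ M, 0 ≤ ∫ x, (|m x| - |s x| * |m x| - s x * m x) ∂ν := by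
    intro m hm
    refine first_order ν hf (hM m) fun t => ?_
    have h1 := hopt (t • m) (M.smul_mem t hm)
    rw [hnorm_sub, hnorm] at h1
    refine h1.trans_eq (integral_congr_ae ?_)
    filter_upwards [Lp.coeFn_smul t m] with x hx
    rw [hx, Pi.smul_apply, smul_eq_mul]
  have : ProperSpace M := FiniteDimensional.proper ℝ M
  -- A finite net of the unit sphere of `M`; only its members are controlled on `B`.
  obtain ⟨T, hTs, hTfin, hTcov⟩ :=
    (isCompact_sphere (0 : M) 1).finite_cover_balls (e := δ / 4) (by positivity)
  obtain ⟨B, hB, hBapp⟩ := exists_approx ν hna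
    (H := {fun x => |f x|} ∪ ((fun (m : M) (x : K) => s x * m.1 x) '' T ∪
      (fun (m : M) (x : K) => |s x| * |m.1 x|) '' T))
    ((Set.finite_singleton _).union ((hTfin.image _).union (hTfin.image _)))
    (by
      rintro h (rfl | ⟨m, -, rfl⟩ | ⟨m, -, rfl⟩)
      · exact hf.abs
      · exact hsM m.1
      · exact hsaM m.1) hδ0.le hδ1 (η := δ / 8) (by positivity)
  have hBf := hBapp _ (Or.inl rfl)
  have hBs : ∀ m ∈ T, _ := fun m hm => hBapp _ (Or.inr (Or.inl ⟨m, hm, rfl⟩))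
  have hBa : ∀ m ∈ T, _ := fun m hm => hBapp _ (Or.inr (Or.inr ⟨m, hm, rfl⟩))
  -- `u` is minus the sign of the perturbed function `Bᶜ.indicator f`, and `1 - |u|` is the indicator
  -- of its zero set. So `Φ m` is the derivative at `0` of `t ↦ ‖Bᶜ.indicator f - t m‖` from the right.
  set u : K → ℝ := fun x => -(Bᶜ.indicator s x) with hu
  have hum : AEStronglyMeasurable u ν := (hsm.indicator hB.compl).neg
  have hu1 : ∀ x, |u x| ≤ 1 := fun x => by
    by_cases hx : x ∈ B
    · simp [hu, hx]
    · simpa [hu, hx] using hs1 x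
  have huM : ∀ m : Lp ℝ 1 ν, Integrable (fun x => u x * m x) ν := fun m =>
    (hM m).bdd_mul hum (ae_of_all _ hu1)
  have hvM : ∀ m : Lp ℝ 1 ν, Integrable (fun x => (1 - |u x|) * |m x|) ν := fun m => by
    have := (hM m).abs.sub (huM m).abs
    refine this.congr (ae_of_all _ fun x => ?_)
    simp only [Pi.sub_apply, abs_mul]
    ring
  set Φ : Lp ℝ 1 ν → ℝ := fun m => ∫ x, (u x * m x + (1 - |u x|) * |m x|) ∂ν with hΦ
  have hΦi : ∀ m : Lp ℝ 1 ν, Integrable (fun x => u x * m x + (1 - |u x|) * |m x|) ν :=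
    fun m => (huM m).add (hvM m)
  have hgi : Integrable (Bᶜ.indicator f) ν := hf.indicator hB.compl
  have hΦlip : ∀ m m' : Lp ℝ 1 ν, Φ m' - ‖m - m'‖ ≤ Φ m := by
    intro m m'
    have hd : Integrable (fun x => |m x - m' x|) ν := ((hM m).sub (hM m')).abs
    rw [hnorm_sub, hΦ, ← integral_sub (hΦi m') hd]
    refine integral_mono ((hΦi m').sub hd) (hΦi m) fun x => ?_
    have h1 : u x * (m' x - m x) ≤ |u x| * |m x - m' x| := by
      rw [abs_sub_comm, ← abs_mul]
      exact le_abs_self _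
    have h2 : (1 - |u x|) * (|m' x| - |m x|) ≤ (1 - |u x|) * |m x - m' x| := by
      refine mul_le_mul_of_nonneg_left ?_ (by linarith [hu1 x])
      rw [abs_sub_comm]
      exact abs_sub_abs_le_abs_sub _ _
    simp only
    linarith
  have hΦhom : ∀ (c : ℝ) (m : Lp ℝ 1 ν), 0 ≤ c → Φ (c • m) = c * Φ m := by
    intro c m hc
    rw [hΦ, ← integral_const_mul]
    refine integral_congr_ae ?_
    filter_upwards [Lp.coeFn_smul c m] with x hx
    rw [hx, Pi.smul_apply, smul_eq_mul, abs_mul, abs_of_nonneg hc]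
    ring
  have hΦT : ∀ m ∈ T, 3 * δ / 4 ≤ Φ m.1 := by
    intro m hm
    have hm1 : ∫ x, |m.1 x| ∂ν = 1 := by
      rw [← hnorm]
      simpa using hTs hm
    have h0 := hfo m.1 m.2
    have h1 := (abs_le.1 (hBs m hm)).1
    have h2 := (abs_le.1 (hBa m hm)).1
    have i0 : Integrable (fun x => |m.1 x| - |s x| * |m.1 x|) ν := (hM m.1).abs.sub (hsaM m.1)
    have i1 : Integrable (fun x => |m.1 x| - |s x| * |m.1 x| - s x * m.1 x) ν := i0.sub (hsM m.1)
    have i2 : Integrable (fun x => B.indicator (fun x => s x * m.1 x) x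
        + B.indicator (fun x => |s x| * |m.1 x|) x) ν :=
      ((hsM m.1).indicator hB).add ((hsaM m.1).indicator hB)
    -- Passing from `f` to `Bᶜ.indicator f` only changes the derivative by integrals over `B`.
    have hsplit : Φ m.1 = ∫ x, (|m.1 x| - |s x| * |m.1 x| - s x * m.1 x) ∂ν
        + (∫ x in B, s x * m.1 x ∂ν + ∫ x in B, |s x| * |m.1 x| ∂ν) := by
      rw [← integral_indicator hB, ← integral_indicator hB,
        ← integral_add ((hsM m.1).indicator hB) ((hsaM m.1).indicator hB),
        ← integral_add i1 i2]
      refine integral_congr_ae (ae_of_all _ fun x => ?_)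
      by_cases hx : x ∈ B
      · simp [hu, hx]
        ring
      · simp [hu, hx]
        ring
    rw [integral_sub i0 (hsM m.1), integral_sub (hM m.1).abs (hsaM m.1), hm1] at h0 hsplit
    -- With `J = ∫ |s| |m|` and `L = ∫ s m`, this is
    -- `Φ m ≥ (1 - J - L) + δ (J + L) - δ / 4 = (1 - δ) (1 - J - L) + 3 δ / 4`.
    nlinarith [mul_nonneg (sub_nonneg.2 hδ1) h0]
  -- Homogeneity and the Lipschitz bound extend the estimate from the net to all of `M`.
  have hΦM : ∀ m ∈ M, δ / 2 * ‖m‖ ≤ Φ m := by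
    intro m hm
    rcases eq_or_ne m 0 with rfl | hm0
    · have := hΦhom 0 0 le_rfl
      simp only [zero_smul, zero_mul] at this
      simp [this]
    · have hn : 0 < ‖m‖ := norm_pos_iff.2 hm0
      set m₁ : M := ⟨‖m‖⁻¹ • m, M.smul_mem _ hm⟩ with hm₁
      have hsph : m₁ ∈ Metric.sphere (0 : M) 1 := by
        simp [hm₁, norm_smul, hn.ne']
      obtain ⟨m₂, hm₂, hdist⟩ := Set.mem_iUnion₂.1 (hTcov hsph)
      have hd : ‖m₁.1 - m₂.1‖ < δ / 4 := by
        simpa [dist_eq_norm] using hdist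
      have h1 := hΦlip m₁.1 m₂.1
      have h2 := hΦT m₂ hm₂
      have h3 : Φ m = ‖m‖ * Φ m₁.1 := by
        rw [← hΦhom _ _ hn.le, hm₁, smul_smul, mul_inv_cancel₀ hn.ne', one_smul]
      rw [h3, mul_comm]
      exact mul_le_mul_of_nonneg_left (by linarith) hn.le
  obtain ⟨g, hg⟩ : ∃ g : Lp ℝ 1 ν, g =ᵐ[ν] Bᶜ.indicator f := ⟨hgi.toL1 _, hgi.coeFn_toL1⟩
  refine ⟨g, ?_, δ / 2, by positivity, fun m hm => (hΦM m hm).trans ?_⟩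
  · have hfg : ‖f - g‖ = ∫ x in B, |f x| ∂ν := by
      rw [hnorm_sub, ← integral_indicator hB]
      refine integral_congr_ae ?_
      filter_upwards [hg] with x hx
      rw [hx]
      by_cases hxB : x ∈ B <;> simp [hxB]
    have h1 := (abs_le.1 hBf).2
    rw [← hnorm] at h1
    rw [hfg]
    linarith
  · rw [hnorm_sub, hnorm]
    have hae : (fun x => |g x - m x|) =ᵐ[ν] fun x => |Bᶜ.indicator f x - m x| := by
      filter_upwards [hg] with x hx
      rw [hx]
    have hae' : (fun x => |g x|) =ᵐ[ν] fun x => |Bᶜ.indicator f x| := by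
      filter_upwards [hg] with x hx
      rw [hx]
    have i1 : Integrable (fun x => |Bᶜ.indicator f x - m x|) ν := (hgi.sub (hM m)).abs
    rw [integral_congr_ae hae, integral_congr_ae hae', ← integral_sub i1 hgi.abs]
    refine integral_mono (hΦi m) (i1.sub hgi.abs) fun x => ?_
    by_cases hxB : x ∈ B
    · simp [hu, hxB]
    · simpa [hu, hs, hxB] using le_abs_sub_sub_abs (f x) (m x)

/-- Let `ν` be a non-atomic σ-finite positive measure (every set
of positive measure contains a subset of strictly smaller positive measure) and `M`
a finite-dimensional subspace of the real `L¹(K, ν)`.  Then the set of `f` having a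
strongly unique best approximant from `M` is dense in `L¹(K, ν)`. -/
theorem stmt_13 {K : Type*} [MeasurableSpace K] (ν : Measure K) [SigmaFinite ν]
    (hna : ∀ s : Set K, MeasurableSet s → 0 < ν s →
      ∃ t ⊆ s, MeasurableSet t ∧ 0 < ν t ∧ ν t < ν s)
    (M : Submodule ℝ (Lp ℝ 1 ν)) [FiniteDimensional ℝ M]
    (f : Lp ℝ 1 ν) (ε : ℝ) (hε : 0 < ε) :
    ∃ g : Lp ℝ 1 ν, ‖f - g‖ < ε ∧
      ∃ mstar ∈ M, ∃ γ : ℝ, 0 < γ ∧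
        ∀ m ∈ M, γ * ‖m - mstar‖ ≤ ‖g - m‖ - ‖g - mstar‖ := by
  have : ProperSpace M := FiniteDimensional.proper ℝ M
  obtain ⟨p, hp⟩ : ∃ p : M, ∀ m : M, ‖f - p.1‖ ≤ ‖f - m.1‖ := by
    have hc : Continuous fun m : M => ‖f - m.1‖ :=
      (continuous_const.sub continuous_subtype_val).norm
    refine hc.exists_forall_le ?_
    refine tendsto_atTop_mono (f := fun m : M => ‖m‖ - ‖f‖) (fun m => ?_)
      (tendsto_atTop_add_const_right _ _ tendsto_norm_cocompact_atTop)
    have h : ‖m.1‖ - ‖f‖ ≤ ‖f - m.1‖ := by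
      rw [norm_sub_rev f m.1]
      exact norm_sub_norm_le m.1 f
    exact h
  obtain ⟨g, hg, γ, hγ, hgγ⟩ := exists_of_zero_best ν hna M (f - p.1) (fun m hm => by
    rw [sub_sub]
    exact hp ⟨p.1 + m, M.add_mem p.2 hm⟩) ε hε
  refine ⟨g + p.1, ?_, p.1, p.2, γ, hγ, fun m hm => ?_⟩
  · have e : f - (g + p.1) = f - p.1 - g := by abel
    rwa [e]
  · have h := hgγ (m - p.1) (M.sub_mem hm p.2)
    have e : g + p.1 - m = g - (m - p.1) := by abel
    rwa [e, add_sub_cancel_right]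
end

section
/- Let a < b, let r ≥ 2 be an integer, and let M be a finite-dimensional subspace of C[a,b] all of whose elements are r-times continuously differentiable on [a,b]. Assume M is a unicity space with respect to C^r[a,b] in the uniform norm, i.e. every r-times continuously differentiable function on [a,b] has a unique best uniform approximant from M. Let f be r-times continuously differentiable on [a,b], let m* ∈ M be its best uniform approximant from M, and let σ > 0. Then there exists γ > 0 (depending only on f, M and σ) such that every m ∈ M satisfying ‖f − m‖ − ‖f − m*‖ ≤ σ also satisfies ‖f − m‖ − ‖f − m*‖ ≥ γ‖m − m*‖². -/
/-!
After subtracting `m*`, the best approximant to `g = f - m*` is `0`. Separation in finite dimension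
(`exists_signature`) gives finitely many points `x i` with `|g (x i)| = ‖g‖` and weights `w i > 0`
such that `∑ w i * g (x i) * m (x i) = 0` for all `m ∈ M`.

Unicity enters only through `eq_zero_of_vanish_on_signature`: the values of `m` at the points `x i`
together with its derivatives at those that are interior determine `m ∈ M`, hence their maximum is
a norm on `M`, equivalent to the uniform norm.

Let `Δ = ‖g - m‖ - ‖g‖`. Each `-g (x i) * m (x i)` is at most `‖g‖ * Δ`, and since the weighted sum
vanishes, `|m (x i)| = O(Δ)`. At an interior `x i` the derivative of `g` vanishes, so `|g|` drops by
`O(t²)` at distance `t`; comparing with `|g - m| ≤ ‖g‖ + Δ` at `x i ± t` gives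
`t * |D| = O(Δ + t²)` for the derivative `D` of `m` at `x i`. With `t = ε * ‖m‖` and `ε` small, the
norm equivalence turns both estimates into `‖m‖² = O(Δ)`.
-/

open Set

/-! ### Second-order Taylor estimates on a compact interval -/

lemma taylor_bound {a b : ℝ} (hab : a < b) {F : ℝ → ℝ} (hF : ContDiffOn ℝ 2 F (Icc a b)) :
    ∃ C : ℝ, 0 ≤ C ∧ ∀ x ∈ Icc a b, ∀ y ∈ Icc a b,
      |F y - F x - derivWithin F (Icc a b) x * (y - x)| ≤ C * (y - x) ^ 2 := by
  have hu := uniqueDiffOn_Icc hab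
  have hd : ContDiffOn ℝ 1 (derivWithin F (Icc a b)) (Icc a b) :=
    hF.derivWithin hu (by norm_num)
  obtain ⟨C, hC⟩ := isCompact_Icc.exists_bound_of_continuousOn
    (hd.continuousOn_derivWithin hu le_rfl)
  refine ⟨max C 0, le_max_right _ _, fun x hx y hy => ?_⟩
  have hsub : uIcc x y ⊆ Icc a b := (convex_Icc a b).ordConnected.uIcc_subset hx hy
  have hLip : ∀ z ∈ Icc a b,
      ‖derivWithin F (Icc a b) z - derivWithin F (Icc a b) x‖ ≤ max C 0 * ‖z - x‖ := fun z hz =>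
    Convex.norm_image_sub_le_of_norm_derivWithin_le (hd.differentiableOn (by norm_num))
      (fun w hw => (hC w hw).trans (le_max_left _ _)) (convex_Icc a b) hx hz
  have h1 : ∀ z ∈ uIcc x y, HasDerivWithinAt (fun z => F z - derivWithin F (Icc a b) x * z)
      (derivWithin F (Icc a b) z - derivWithin F (Icc a b) x) (uIcc x y) z := by
    intro z hz
    have h := ((hF.differentiableOn (by norm_num)) z (hsub hz)).hasDerivWithinAt.mono hsub
    have h' := h.sub ((hasDerivWithinAt_id z (uIcc x y)).const_mul (derivWithin F (Icc a b) x))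
    rw [mul_one] at h'
    exact h'
  have h2 : ∀ z ∈ uIcc x y, ‖derivWithin F (Icc a b) z - derivWithin F (Icc a b) x‖
      ≤ max C 0 * |y - x| := by
    intro z hz
    refine (hLip z (hsub hz)).trans ?_
    have := abs_sub_left_of_mem_uIcc hz
    gcongr
    simpa [Real.norm_eq_abs] using this
  have h3 := Convex.norm_image_sub_le_of_norm_hasDerivWithin_le h1 h2 (convex_uIcc x y)
    left_mem_uIcc right_mem_uIcc
  rw [Real.norm_eq_abs, Real.norm_eq_abs, mul_assoc, abs_mul_abs_self] at h3
  calc _ = |F y - derivWithin F (Icc a b) x * y - (F x - derivWithin F (Icc a b) x * x)| := by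
        congr 1; ring
    _ ≤ _ := by rw [pow_two]; exact h3

/-- Point evaluation as a linear functional on a space of continuous functions. -/
def evalLM {X : Type*} [TopologicalSpace X] (M : Submodule ℝ C(X, ℝ)) (x : X) : M →ₗ[ℝ] ℝ where
  toFun m := m.1 x
  map_add' _ _ := rfl
  map_smul' _ _ := rfl

/-- The derivative at `x` (one-sided at the endpoints) as a linear functional on a space of
differentiable functions on `[a, b]`; `IccExtend` extends them to the line. -/
noncomputable def derivLM {a b : ℝ} (hab : a < b) (M : Submodule ℝ C(Icc a b, ℝ))
    (hM : ∀ m ∈ M, DifferentiableOn ℝ (IccExtend hab.le m) (Icc a b)) (x : Icc a b) :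
    M →ₗ[ℝ] ℝ where
  toFun m := derivWithin (IccExtend hab.le m.1) (Icc a b) x
  map_add' m n := by
    rw [← derivWithin_add (hM _ m.2 _ x.2) (hM _ n.2 _ x.2)]
    rfl
  map_smul' c m := by
    rw [RingHom.id_apply, smul_eq_mul, ← derivWithin_const_mul c (hM _ m.2 _ x.2)]
    rfl

lemma uniform_bound {V ι : Type*} [NormedAddCommGroup V] [NormedSpace ℝ V]
    [FiniteDimensional ℝ V] (T : ι → V →ₗ[ℝ] ℝ) (h : ∀ v, ∃ C, ∀ i, |T i v| ≤ C) :
    ∃ C : ℝ, 0 ≤ C ∧ ∀ i v, |T i v| ≤ C * ‖v‖ := by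
  have : CompleteSpace V := FiniteDimensional.complete ℝ V
  obtain ⟨C, hC⟩ := banach_steinhaus (g := fun i => LinearMap.toContinuousLinearMap (T i)) h
  refine ⟨max C 0, le_max_right _ _, fun i v => ?_⟩
  refine ((LinearMap.toContinuousLinearMap (T i)).le_opNorm v).trans ?_
  exact mul_le_mul_of_nonneg_right ((hC i).trans (le_max_left _ _)) (norm_nonneg v)

/-- On a finite-dimensional space of `C²` functions, the constant in the Taylor estimate can be
chosen proportional to the uniform norm, by the uniform boundedness principle. -/
lemma uniform_taylor {a b : ℝ} (hab : a < b) (M : Submodule ℝ C(Icc a b, ℝ))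
    [FiniteDimensional ℝ M]
    (hM : ∀ m ∈ M, ContDiffOn ℝ 2 (IccExtend hab.le m) (Icc a b)) :
    ∃ C : ℝ, 0 ≤ C ∧ ∀ m ∈ M, ∀ x y : Icc a b,
      |m y - m x - derivWithin (IccExtend hab.le m) (Icc a b) x * (y - x : ℝ)|
        ≤ C * ‖m‖ * (y - x : ℝ) ^ 2 := by
  have hD : ∀ m ∈ M, DifferentiableOn ℝ (IccExtend hab.le m) (Icc a b) :=
    fun m hm => (hM m hm).differentiableOn (by norm_num)
  let T : Icc a b × Icc a b → (M →ₗ[ℝ] ℝ) := fun p => ((p.2 - p.1 : ℝ) ^ 2)⁻¹ •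
    (evalLM M p.2 - evalLM M p.1 - (p.2 - p.1 : ℝ) • derivLM hab M hD p.1)
  have hT : ∀ p (m : M), T p m = ((p.2 - p.1 : ℝ) ^ 2)⁻¹ * (m.1 p.2 - m.1 p.1 -
      derivWithin (IccExtend hab.le m.1) (Icc a b) p.1 * (p.2 - p.1 : ℝ)) := by
    intro p m
    simp only [T, LinearMap.smul_apply, LinearMap.sub_apply,
      smul_eq_mul, evalLM, derivLM, LinearMap.coe_mk, AddHom.coe_mk]
    ring
  have hpt : ∀ m : M, ∃ C, ∀ p, |T p m| ≤ C := by
    intro m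
    obtain ⟨C, hC0, hC⟩ := taylor_bound hab (hM m.1 m.2)
    refine ⟨C, fun p => ?_⟩
    have h := hC p.1 p.1.2 p.2 p.2.2
    simp only [IccExtend_val] at h
    rw [hT, abs_mul, abs_of_nonneg (by positivity), inv_mul_eq_div]
    exact div_le_of_le_mul₀ (by positivity) hC0 h
  obtain ⟨C, hC0, hC⟩ := uniform_bound (V := M) T hpt
  refine ⟨C, hC0, fun m hm x y => ?_⟩
  rcases eq_or_ne x y with rfl | hxy
  · simp
  have hpos : 0 < (y - x : ℝ) ^ 2 := by
    have : (y : ℝ) - x ≠ 0 := sub_ne_zero.2 fun h => hxy (Subtype.ext h.symm)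
    positivity
  have h1 := hC (x, y) ⟨m, hm⟩
  rw [hT, abs_mul, abs_of_nonneg (by positivity), inv_mul_eq_div, div_le_iff₀ hpos] at h1
  exact h1

/-! ### Annihilating functionals supported on extremal points -/

/-- By Carathéodory's theorem, the convex hull is a continuous image of
`stdSimplex × sⁿ` with `n = finrank + 1`. -/
lemma isCompact_convexHull_of_finrank {E : Type*} [NormedAddCommGroup E] [NormedSpace ℝ E]
    [FiniteDimensional ℝ E] {s : Set E} (hs : IsCompact s) : IsCompact (convexHull ℝ s) := by
  rcases s.eq_empty_or_nonempty with rfl | ⟨z0, hz0⟩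
  · simp
  let n := Module.finrank ℝ E + 1
  have hK : IsCompact (stdSimplex ℝ (Fin n) ×ˢ (univ.pi fun _ : Fin n => s)) :=
    (isCompact_stdSimplex ℝ (Fin n)).prod (isCompact_univ_pi fun _ => hs)
  have hc : Continuous fun p : (Fin n → ℝ) × (Fin n → E) => ∑ i, p.1 i • p.2 i := by fun_prop
  convert hK.image hc using 1
  apply Subset.antisymm
  · intro x hx
    obtain ⟨ι, _, z, w, hz, hind, hw, hw1, hx⟩ := eq_pos_convex_span_of_mem_convexHull hx
    have hcard : Fintype.card ι ≤ Fintype.card (Fin n) := by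
      rw [Fintype.card_fin]
      exact hind.card_le_finrank_succ.trans (Nat.succ_le_succ (Submodule.finrank_le _))
    obtain ⟨e⟩ := Function.Embedding.nonempty_of_card_le hcard
    -- pad the combination with zero weights at `z0`
    have hwe : ∀ i ∉ range e, Function.extend e w 0 i = 0 := fun i hi => by
      rw [Function.extend_apply' _ _ _ (by simpa using hi)]; rfl
    refine ⟨(Function.extend e w 0, Function.extend e z fun _ => z0), ⟨⟨?_, ?_⟩, ?_⟩, ?_⟩
    · intro i
      by_cases hi : i ∈ range e
      · obtain ⟨j, rfl⟩ := hi
        simpa [e.injective.extend_apply] using (hw j).le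
      · exact (hwe i hi).ge
    · rw [← hw1]
      exact (Fintype.sum_of_injective e e.injective _ _ hwe
        fun i => (e.injective.extend_apply _ _ i).symm).symm
    · intro i _
      by_cases hi : i ∈ range e
      · obtain ⟨j, rfl⟩ := hi
        simpa [e.injective.extend_apply] using hz (mem_range_self j)
      · simpa [Function.extend_apply' _ _ _ (by simpa using hi : ¬ ∃ a, e a = i)] using hz0
    · rw [← hx]
      refine (Fintype.sum_of_injective e e.injective _ _ (fun i hi => ?_) fun i => ?_).symm
      · simp [hwe i hi]
      · simp [e.injective.extend_apply]
  · rintro _ ⟨⟨w, z⟩, ⟨⟨hw0, hw1⟩, hz⟩, rfl⟩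
    exact (convex_convexHull ℝ s).sum_mem (fun i _ => hw0 i) hw1
      fun i _ => subset_convexHull ℝ s (hz i (mem_univ i))

/-- Kolmogorov's criterion, necessity: no `m` is strictly of the sign of `g` on the extremal set of
`g`, if subtracting multiples of `m` from `g` never decreases the norm. -/
lemma kolmogorov {X : Type*} [MetricSpace X] [CompactSpace X] [Nonempty X] (g m : C(X, ℝ))
    (h : ∀ t : ℝ, ‖g‖ ≤ ‖g - t • m‖) : ∃ x, |g x| = ‖g‖ ∧ g x * m x ≤ 0 := by
  rcases eq_or_ne g 0 with rfl | hg
  · exact ⟨Classical.arbitrary X, by simp⟩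
  have key : ∀ n : ℕ, ∃ x, ‖g‖ ≤ |g x - (1 / ((n : ℝ) + 1)) * m x| := by
    intro n
    by_contra! hcon
    refine (h (1 / ((n : ℝ) + 1))).not_gt ?_
    rw [ContinuousMap.norm_lt_iff _ (norm_pos_iff.2 hg)]
    intro x
    simpa using hcon x
  choose x hx using key
  obtain ⟨y, φ, hφ, hy⟩ := CompactSpace.tendsto_subseq x
  have ht : Filter.Tendsto (fun n => 1 / ((φ n : ℝ) + 1)) Filter.atTop (nhds 0) :=
    tendsto_one_div_add_atTop_nhds_zero_nat.comp hφ.tendsto_atTop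
  have hgy : Filter.Tendsto (fun n => g (x (φ n))) Filter.atTop (nhds (g y)) :=
    (g.continuous.tendsto y).comp hy
  have hmy : Filter.Tendsto (fun n => m (x (φ n))) Filter.atTop (nhds (m y)) :=
    (m.continuous.tendsto y).comp hy
  refine ⟨y, le_antisymm (g.norm_coe_le_norm y) ?_, ?_⟩
  · have := (hgy.sub (ht.mul hmy)).abs
    rw [zero_mul, sub_zero] at this
    exact ge_of_tendsto' this fun n => hx (φ n)
  · -- squaring `‖g‖ ≤ |g - t m|` at `x n` gives `2 g m ≤ t m²` there
    have h1 := ht.mul (hmy.pow 2)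
    have h2 := (hgy.mul hmy).const_mul 2
    have h3 := le_of_tendsto_of_tendsto' h2 h1 fun n => by
      have hp : 0 < 1 / ((φ n : ℝ) + 1) := by positivity
      set t := 1 / ((φ n : ℝ) + 1)
      have h4 : |g (x (φ n))| ≤ |g (x (φ n)) - t * m (x (φ n))| :=
        (g.norm_coe_le_norm _).trans (hx (φ n))
      have h5 := sq_le_sq.2 h4
      refine le_of_mul_le_mul_left ?_ hp
      nlinarith
    linarith

/-- If `0` is a best approximant to `g` from `M`, some nontrivial positive combination of the
functionals `m ↦ g x * m x`, with `x` running over extremal points of `g`, annihilates `M`. -/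
lemma exists_signature {X : Type*} [MetricSpace X] [CompactSpace X] [Nonempty X]
    (M : Submodule ℝ C(X, ℝ)) [FiniteDimensional ℝ M] (g : C(X, ℝ))
    (hbest : ∀ m ∈ M, ‖g‖ ≤ ‖g - m‖) :
    ∃ (ι : Type) (_ : Fintype ι) (x : ι → X) (w : ι → ℝ), (∀ i, 0 < w i) ∧ ∑ i, w i = 1 ∧
      (∀ i, |g (x i)| = ‖g‖) ∧ ∀ m ∈ M, ∑ i, w i * (g (x i) * m (x i)) = 0 := by
  let B := Module.finBasis ℝ M
  let Φ : X → (Fin (Module.finrank ℝ M) → ℝ) := fun x j => g x * (B j).1 x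
  have hΦ : Continuous Φ := by
    refine continuous_pi fun j => ?_
    exact g.continuous.mul (B j).1.continuous
  let A : Set X := {x | |g x| = ‖g‖}
  have hA : IsCompact A := (isClosed_eq (by fun_prop) continuous_const).isCompact
  have hΦl : ∀ (l : (Fin (Module.finrank ℝ M) → ℝ) →ₗ[ℝ] ℝ) (x : X),
      l (Φ x) = g x * (∑ j, (l fun k => if j = k then 1 else 0) • B j : M).1 x := by
    intro l x
    rw [LinearMap.pi_apply_eq_sum_univ l (Φ x)]
    simp only [Φ, smul_eq_mul, Submodule.coe_sum, Submodule.coe_smul, ContinuousMap.coe_sum,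
      ContinuousMap.coe_smul, Finset.sum_apply, Pi.smul_apply, Finset.mul_sum]
    exact Finset.sum_congr rfl fun j _ => by ring
  have h0 : (0 : Fin (Module.finrank ℝ M) → ℝ) ∈ convexHull ℝ (Φ '' A) := by
    by_contra h0
    obtain ⟨l, u, hl0, hl⟩ := geometric_hahn_banach_point_closed (convex_convexHull ℝ _)
      (isCompact_convexHull_of_finrank (hA.image hΦ)).isClosed h0
    rw [map_zero] at hl0
    obtain ⟨x, hxA, hx⟩ := kolmogorov g
      (∑ j, (l.toLinearMap fun k => if j = k then 1 else 0) • B j : M).1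
      (fun t => hbest _ (M.smul_mem t (Subtype.prop _)))
    have h1 := hl (Φ x) (subset_convexHull ℝ _ ⟨x, hxA, rfl⟩)
    have h2 := hΦl l.toLinearMap x
    have h3 : l.toLinearMap (Φ x) = l (Φ x) := rfl
    linarith
  obtain ⟨ι, _, z, w, hz, -, hw, hw1, hsum⟩ := eq_pos_convex_span_of_mem_convexHull h0
  choose x hxA hxz using fun i => hz (mem_range_self i)
  refine ⟨ι, inferInstance, x, w, hw, hw1, hxA, fun m hm => ?_⟩
  let c := B.repr ⟨m, hm⟩
  have hm' : m = (∑ j, c j • B j : M).1 := by rw [B.sum_repr]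
  have hco : ∀ j, ∑ i, w i * (g (x i) * (B j).1 (x i)) = 0 := by
    intro j
    have := congrFun hsum j
    simpa [← hxz, Φ] using this
  calc ∑ i, w i * (g (x i) * m (x i))
      = ∑ j, c j * ∑ i, w i * (g (x i) * (B j).1 (x i)) := by
        rw [hm']
        simp only [Submodule.coe_sum, Submodule.coe_smul, ContinuousMap.coe_sum,
          ContinuousMap.coe_smul, Finset.sum_apply, Pi.smul_apply, Finset.mul_sum, smul_eq_mul]
        rw [Finset.sum_comm]
        exact Finset.sum_congr rfl fun j _ => Finset.sum_congr rfl fun i _ => by ring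
    _ = 0 := by simp [hco]

/-! ### Nondegeneracy of the signature -/

/-- A function dominated by each of finitely many nonnegative functions with no common zeros is
dominated by their product. -/
lemma dominated_by_prod {S : Set ℝ} (hS : IsCompact S) (w : ℝ → ℝ → ℝ)
    (hc : ∀ p, ContinuousOn (w p) S) (hnn : ∀ p, ∀ y ∈ S, 0 ≤ w p y)
    (hz : ∀ p, ∀ y ∈ S, w p y = 0 → y = p) (v : ℝ → ℝ) (hb : ∃ C, ∀ y ∈ S, |v y| ≤ C)
    (P : Finset ℝ) (hv : ∀ p ∈ P, ∃ C, ∀ y ∈ S, |v y| ≤ C * w p y) :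
    ∃ C, 0 ≤ C ∧ ∀ y ∈ S, |v y| ≤ C * ∏ p ∈ P, w p y := by
  induction P using Finset.induction_on with
  | empty =>
    obtain ⟨C, hC⟩ := hb
    exact ⟨max C 0, le_max_right _ _, fun y hy => by simpa using Or.inl (hC y hy)⟩
  | insert p Q hpQ ih =>
    obtain ⟨C2, hC20, hC2⟩ := ih fun q hq => hv q (Finset.mem_insert_of_mem hq)
    obtain ⟨C1, hC1⟩ := hv p (Finset.mem_insert_self p Q)
    have hQ0 : ∀ y ∈ S, 0 ≤ ∏ q ∈ Q, w q y := fun y hy => Finset.prod_nonneg fun q _ => hnn q y hy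
    obtain ⟨δ, hδ, hδS⟩ := hS.exists_forall_le' (f := fun y => w p y + ∏ q ∈ Q, w q y) (a := 0)
      ((hc p).add (continuousOn_finsetProd Q fun q _ => hc q)) (by
        intro y hy
        refine lt_of_le_of_ne (add_nonneg (hnn p y hy) (hQ0 y hy)) fun h => ?_
        have h1 : w p y = 0 := by linarith [hnn p y hy, hQ0 y hy]
        have h2 : ∏ q ∈ Q, w q y = 0 := by linarith [hnn p y hy, hQ0 y hy]
        obtain ⟨q, hq, hq0⟩ := Finset.prod_eq_zero_iff.1 h2
        exact hpQ ((hz p y hy h1).symm.trans (hz q y hy hq0) ▸ hq))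
    refine ⟨(max C1 0 + C2) / δ, by positivity, fun y hy => ?_⟩
    rw [Finset.prod_insert hpQ]
    have hA := hnn p y hy
    have hB := hQ0 y hy
    have h1 : |v y| ≤ max C1 0 * w p y :=
      (hC1 y hy).trans (mul_le_mul_of_nonneg_right (le_max_left _ _) hA)
    have h2 := hC2 y hy
    have h3 := hδS y hy
    set A := w p y
    set B := ∏ q ∈ Q, w q y
    rw [div_mul_eq_mul_div, le_div_iff₀ hδ]
    nlinarith [mul_le_mul_of_nonneg_left h3 (abs_nonneg (v y)),
      mul_le_mul_of_nonneg_left h1 hB, mul_le_mul_of_nonneg_left h2 hA]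

/-- In a unicity space no nonzero `u` vanishes on the support of a signature with vanishing
derivative at its interior points. Otherwise, for a weight `φ ≥ 0` that vanishes exactly on the
support and dominates `|u|`, both `0` and small multiples of `u` are best approximants to
`g * (1 - c * φ)`. -/
lemma eq_zero_of_vanish_on_signature {a b : ℝ} (hab : a < b) {r : ℕ} (hr : 2 ≤ r)
    (M : Submodule ℝ C(Icc a b, ℝ))
    (hM : ∀ m ∈ M, ContDiffOn ℝ r (IccExtend hab.le m) (Icc a b))
    (hunic : ∀ g : C(Icc a b, ℝ), ContDiffOn ℝ r (IccExtend hab.le g) (Icc a b) →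
      ∃! mg : C(Icc a b, ℝ), mg ∈ M ∧ ∀ m ∈ M, ‖g - mg‖ ≤ ‖g - m‖)
    (g : C(Icc a b, ℝ)) (hg : ContDiffOn ℝ r (IccExtend hab.le g) (Icc a b)) (hE : 0 < ‖g‖)
    {ι : Type} [Fintype ι] (x : ι → Icc a b) (w : ι → ℝ) (hw : ∀ i, 0 < w i)
    (hw1 : ∑ i, w i = 1) (hx : ∀ i, |g (x i)| = ‖g‖)
    (hsig : ∀ m ∈ M, ∑ i, w i * (g (x i) * m (x i)) = 0)
    (u : C(Icc a b, ℝ)) (hu : u ∈ M) (hu0 : ∀ i, u (x i) = 0)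
    (hu1 : ∀ i, a < x i → (x i : ℝ) < b →
      derivWithin (IccExtend hab.le u) (Icc a b) (x i) = 0) : u = 0 := by
  classical
  have hr2 : (2 : WithTop ℕ∞) ≤ r := by exact_mod_cast hr
  -- a smooth weight vanishing only at `p`, to the order forced on `u` there: double at interior
  -- points, simple at endpoints
  let W : ℝ → ℝ → ℝ := fun p y => if p = a then y - a else if p = b then b - y else (y - p) ^ 2
  have hWs : ∀ p, ContDiff ℝ r (W p) := by
    intro p
    simp only [W]
    split_ifs <;> fun_prop
  have hWnn : ∀ p, ∀ y ∈ Icc a b, 0 ≤ W p y := by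
    intro p y hy
    simp only [W]
    split_ifs
    · linarith [hy.1]
    · linarith [hy.2]
    · positivity
  have hWz : ∀ p, ∀ y ∈ Icc a b, W p y = 0 → y = p := by
    intro p y hy h
    simp only [W] at h
    split_ifs at h
    · linarith
    · linarith
    · exact sub_eq_zero.1 (pow_eq_zero_iff two_ne_zero |>.1 h)
  obtain ⟨C0, hC0, hT⟩ := taylor_bound hab ((hM u hu).of_le hr2)
  let P : Finset ℝ := Finset.univ.image fun i => (x i : ℝ)
  obtain ⟨C, hC, hdom⟩ := dominated_by_prod isCompact_Icc W
    (fun p => (hWs p).continuous.continuousOn) hWnn hWz (IccExtend hab.le u)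
    ⟨‖u‖, fun y hy => u.norm_coe_le_norm _⟩ P (by
      intro p hp
      obtain ⟨i, -, rfl⟩ := Finset.mem_image.1 hp
      have hi : ∀ y ∈ Icc a b, |IccExtend hab.le u y -
          derivWithin (IccExtend hab.le u) (Icc a b) (x i) * (y - x i)| ≤
          C0 * (y - x i) ^ 2 := by
        intro y hy
        have := hT (x i) (x i).2 y hy
        rwa [IccExtend_val, hu0, sub_zero] at this
      have hend : ∀ y ∈ Icc a b, |IccExtend hab.le u y| ≤
          (|derivWithin (IccExtend hab.le u) (Icc a b) (x i)| + C0 * (b - a)) * |y - x i| := by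
        intro y hy
        have h1 : |y - x i| ≤ b - a := by
          have h2 := (x i).2
          exact abs_le.2 ⟨by linarith [hy.1, h2.2], by linarith [hy.2, h2.1]⟩
        have h3 := abs_sub_abs_le_abs_sub (IccExtend hab.le u y)
          (derivWithin (IccExtend hab.le u) (Icc a b) (x i) * (y - x i))
        rw [abs_mul] at h3
        have h4 := hi y hy
        rw [← sq_abs (y - x i)] at h4
        have h5 : C0 * |y - x i| ^ 2 ≤ C0 * (b - a) * |y - x i| := by
          rw [pow_two, ← mul_assoc]
          gcongr
        linarith
      by_cases ha : (x i : ℝ) = a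
      · refine ⟨|derivWithin (IccExtend hab.le u) (Icc a b) (x i)| + C0 * (b - a),
          fun y hy => (hend y hy).trans (le_of_eq ?_)⟩
        simp only [W, if_pos ha]
        rw [ha, abs_of_nonneg (a := y - a) (by linarith [hy.1])]
      by_cases hb : (x i : ℝ) = b
      · refine ⟨|derivWithin (IccExtend hab.le u) (Icc a b) (x i)| + C0 * (b - a),
          fun y hy => (hend y hy).trans (le_of_eq ?_)⟩
        simp only [W, if_neg ha, if_pos hb]
        rw [hb, abs_of_nonpos (a := y - b) (by linarith [hy.2]), neg_sub]
      · refine ⟨C0, fun y hy => ?_⟩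
        have h := hi y hy
        rw [hu1 i (lt_of_le_of_ne (x i).2.1 (Ne.symm ha)) (lt_of_le_of_ne (x i).2.2 hb),
          zero_mul, sub_zero] at h
        simpa only [W, if_neg ha, if_neg hb] using h)
  let φ : ℝ → ℝ := fun y => ∏ p ∈ P, W p y
  have hφs : ContDiff ℝ r φ := contDiff_prod fun p _ => hWs p
  have hφ0 : ∀ y ∈ Icc a b, 0 ≤ φ y := fun y hy => Finset.prod_nonneg fun p _ => hWnn p y hy
  have hφx : ∀ i, φ (x i) = 0 := by
    intro i
    refine Finset.prod_eq_zero (Finset.mem_image_of_mem _ (Finset.mem_univ i)) ?_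
    simp only [W]
    split_ifs with h1 h2
    · linarith
    · linarith
    · ring
  obtain ⟨B, hB⟩ := isCompact_Icc.exists_bound_of_continuousOn
    (hφs.continuous.continuousOn (s := Icc a b))
  have hB1 : 0 < |B| + 1 := by positivity
  have hcφ : ∀ y ∈ Icc a b, 1 / (|B| + 1) * φ y ≤ 1 := by
    intro y hy
    rw [one_div, inv_mul_le_one₀ hB1]
    have := (le_abs_self _).trans (hB y hy)
    linarith [le_abs_self B]
  have hc : 0 < 1 / (|B| + 1) := by positivity
  set c := 1 / (|B| + 1)
  let h : C(Icc a b, ℝ) := ⟨fun y => g y * (1 - c * φ y), by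
    have := hφs.continuous
    fun_prop⟩
  have hhs : ContDiffOn ℝ r (IccExtend hab.le h) (Icc a b) := by
    refine (hg.mul (contDiffOn_const.sub (contDiffOn_const.mul hφs.contDiffOn)) :
      ContDiffOn ℝ r (fun y => IccExtend hab.le g y * (1 - c * φ y)) _).congr fun y hy => ?_
    rw [IccExtend_of_mem _ _ hy, IccExtend_of_mem _ _ hy]
    rfl
  have hlow : ∀ m ∈ M, ‖g‖ ≤ ‖h - m‖ := by
    intro m hm
    have h1 : ∑ i, w i * (g (x i) * (h - m) (x i)) = ‖g‖ ^ 2 := by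
      have : ∀ i, w i * (g (x i) * (h - m) (x i)) =
          w i * ‖g‖ ^ 2 - w i * (g (x i) * m (x i)) := by
        intro i
        rw [← hx i, sq_abs]
        simp only [h, ContinuousMap.sub_apply, ContinuousMap.coe_mk, hφx]
        ring
      simp only [this, Finset.sum_sub_distrib, hsig m hm, ← Finset.sum_mul, hw1]
      ring
    have h2 : ∑ i, w i * (g (x i) * (h - m) (x i)) ≤ ∑ i, w i * (‖g‖ * ‖h - m‖) := by
      refine Finset.sum_le_sum fun i _ => mul_le_mul_of_nonneg_left ?_ (hw i).le
      refine (le_abs_self _).trans ?_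
      rw [abs_mul, hx]
      exact mul_le_mul_of_nonneg_left ((h - m).norm_coe_le_norm _) hE.le
    rw [h1, ← Finset.sum_mul, hw1, one_mul, pow_two] at h2
    exact le_of_mul_le_mul_left h2 hE
  have hε : 0 < ‖g‖ * c / (C + 1) := by positivity
  have hup : ∀ t : ℝ, 0 ≤ t → t ≤ ‖g‖ * c / (C + 1) → ‖h - t • u‖ ≤ ‖g‖ := by
    intro t ht0 ht
    rw [ContinuousMap.norm_le _ hE.le]
    intro y
    have hd := hdom y y.2
    rw [IccExtend_val] at hd
    have h1 : t * |u y| ≤ ‖g‖ * (c * φ y) := by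
      calc t * |u y| ≤ ‖g‖ * c / (C + 1) * (C * φ y) := by gcongr
        _ = ‖g‖ * (c * φ y) * (C / (C + 1)) := by ring
        _ ≤ ‖g‖ * (c * φ y) * 1 := by
          have := hφ0 y y.2
          have : C / (C + 1) ≤ 1 := (div_le_one (by positivity)).2 (by linarith)
          gcongr
        _ = _ := mul_one _
    have h2 : |g y * (1 - c * φ y)| ≤ ‖g‖ * (1 - c * φ y) := by
      have h3 : 0 ≤ 1 - c * φ y := by linarith [hcφ y y.2]
      rw [abs_mul, abs_of_nonneg h3]
      exact mul_le_mul_of_nonneg_right (g.norm_coe_le_norm y) h3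
    have h3 := abs_sub (g y * (1 - c * φ y)) (t * u y)
    rw [abs_mul t, abs_of_nonneg ht0] at h3
    change |g y * (1 - c * φ y) - t * u y| ≤ ‖g‖
    linarith
  have hz := (hunic h hhs).unique
    ⟨M.zero_mem, fun m hm => (by simpa using hup 0 le_rfl hε.le : ‖h - 0‖ ≤ ‖g‖).trans (hlow m hm)⟩
    ⟨M.smul_mem (‖g‖ * c / (C + 1)) hu, fun m hm => (hup _ hε.le le_rfl).trans (hlow m hm)⟩
  exact (smul_eq_zero.1 hz.symm).resolve_left (ne_of_gt hε)

/-! ### The quadratic lower bound -/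

/-- The signature forces `m` to be `O(Δ)` at its points, where `Δ` is the excess of `‖g - m‖`. -/
lemma signature_value_bound {X : Type*} [MetricSpace X] [CompactSpace X] (g m : C(X, ℝ))
    (hE : 0 < ‖g‖) {ι : Type} [Fintype ι] (x : ι → X) (w : ι → ℝ) (hw : ∀ i, 0 < w i)
    (hw1 : ∑ i, w i = 1) (hx : ∀ i, |g (x i)| = ‖g‖)
    (hsig : ∑ i, w i * (g (x i) * m (x i)) = 0) (hΔ : ‖g‖ ≤ ‖g - m‖) (i : ι) :
    |m (x i)| ≤ 1 / w i * (‖g - m‖ - ‖g‖) := by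
  set Δ := ‖g - m‖ - ‖g‖ with hΔd
  have hΔ0 : 0 ≤ Δ := sub_nonneg.2 hΔ
  have hlow : ∀ j, 0 ≤ g (x j) * m (x j) + ‖g‖ * Δ := by
    intro j
    have h1 : |g (x j) * (g - m) (x j)| ≤ ‖g‖ * ‖g - m‖ := by
      rw [abs_mul, hx]
      exact mul_le_mul_of_nonneg_left ((g - m).norm_coe_le_norm _) hE.le
    have h2 := (le_abs_self _).trans h1
    have h3 : g (x j) ^ 2 = ‖g‖ ^ 2 := by rw [← hx j, sq_abs]
    rw [ContinuousMap.sub_apply] at h2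
    nlinarith
  have hsum : ∑ j, w j * (g (x j) * m (x j) + ‖g‖ * Δ) = ‖g‖ * Δ := by
    simp only [mul_add, Finset.sum_add_distrib, hsig, ← Finset.sum_mul, hw1]
    ring
  have h1 := Finset.single_le_sum (f := fun j => w j * (g (x j) * m (x j) + ‖g‖ * Δ))
    (fun j _ => mul_nonneg (hw j).le (hlow j)) (Finset.mem_univ i)
  have h2 := Finset.single_le_sum (f := w) (fun j _ => (hw j).le) (Finset.mem_univ i)
  rw [hsum] at h1
  rw [hw1] at h2
  have h3 : w i * |g (x i) * m (x i)| ≤ ‖g‖ * Δ := by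
    have h4 := hlow i
    have h5 := hw i
    have h6 : 0 ≤ ‖g‖ * Δ := by positivity
    rw [← abs_of_pos h5, ← abs_mul, abs_le]
    constructor
    · nlinarith
    · nlinarith
  rw [abs_mul, hx] at h3
  rw [one_div, inv_mul_eq_div, le_div_iff₀ (hw i)]
  refine le_of_mul_le_mul_left ?_ hE
  linarith

lemma derivWithin_eq_zero_of_extremal {a b : ℝ} (hab : a < b) (g : C(Icc a b, ℝ)) (x : Icc a b)
    (hx : |g x| = ‖g‖) (hE : 0 < ‖g‖) (hxa : a < x) (hxb : (x : ℝ) < b) :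
    derivWithin (IccExtend hab.le g) (Icc a b) x = 0 := by
  rw [derivWithin_of_mem_nhds (Icc_mem_nhds hxa hxb)]
  have hmax : IsLocalMax (fun y => g x * IccExtend hab.le g y) (x : ℝ) := by
    refine Filter.Eventually.of_forall fun y => ?_
    simp only [IccExtend_val]
    calc g x * IccExtend hab.le g y ≤ |g x * IccExtend hab.le g y| := le_abs_self _
      _ ≤ |g x| * |g x| := by
        rw [abs_mul]
        refine mul_le_mul_of_nonneg_left ?_ (abs_nonneg _)
        rw [hx]
        exact g.norm_coe_le_norm _
      _ = g x * g x := abs_mul_abs_self _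
  have h := hmax.deriv_eq_zero
  rw [deriv_const_mul_field] at h
  refine (mul_eq_zero.1 h).resolve_left fun h0 => ?_
  rw [h0, abs_zero] at hx
  exact hE.ne hx

/-- The case of a best approximant `0`. -/
lemma quadratic_bound {a b : ℝ} (hab : a < b) {r : ℕ} (hr : 2 ≤ r)
    (M : Submodule ℝ C(Icc a b, ℝ)) [FiniteDimensional ℝ M]
    (hM : ∀ m ∈ M, ContDiffOn ℝ r (IccExtend hab.le m) (Icc a b))
    (hunic : ∀ g : C(Icc a b, ℝ), ContDiffOn ℝ r (IccExtend hab.le g) (Icc a b) →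
      ∃! mg : C(Icc a b, ℝ), mg ∈ M ∧ ∀ m ∈ M, ‖g - mg‖ ≤ ‖g - m‖)
    (g : C(Icc a b, ℝ)) (hg : ContDiffOn ℝ r (IccExtend hab.le g) (Icc a b))
    (hbest : ∀ m ∈ M, ‖g‖ ≤ ‖g - m‖) (σ : ℝ) (hσ : 0 < σ) :
    ∃ γ : ℝ, 0 < γ ∧ ∀ m ∈ M, ‖g - m‖ - ‖g‖ ≤ σ → γ * ‖m‖ ^ 2 ≤ ‖g - m‖ - ‖g‖ := by
  have : Nonempty (Icc a b) := ⟨⟨a, left_mem_Icc.2 hab.le⟩⟩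
  rcases eq_or_ne g 0 with rfl | hg0
  · refine ⟨1 / σ, by positivity, fun m _ h => ?_⟩
    simp only [zero_sub, norm_neg, norm_zero, sub_zero] at h ⊢
    rw [one_div, inv_mul_eq_div, div_le_iff₀ hσ, pow_two]
    exact mul_le_mul_of_nonneg_left h (norm_nonneg _)
  have hE : 0 < ‖g‖ := norm_pos_iff.2 hg0
  have hr2 : (2 : WithTop ℕ∞) ≤ r := by exact_mod_cast hr
  have hM2 : ∀ m ∈ M, ContDiffOn ℝ 2 (IccExtend hab.le m) (Icc a b) :=
    fun m hm => (hM m hm).of_le hr2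
  have hMd : ∀ m ∈ M, DifferentiableOn ℝ (IccExtend hab.le m) (Icc a b) :=
    fun m hm => (hM2 m hm).differentiableOn (by norm_num)
  obtain ⟨ι, _, x, w, hw, hw1, hx, hsig⟩ := exists_signature M g hbest
  have : Nonempty ι := by
    by_contra hι
    rw [not_nonempty_iff] at hι
    simp at hw1
  obtain ⟨Cg, hCg, hTg⟩ := taylor_bound hab (hg.of_le hr2)
  obtain ⟨CM, hCM, hTM⟩ := uniform_taylor hab M hM2
  -- values at the signature together with derivatives at its interior points give a norm on `M`
  classical
  let L : M →ₗ[ℝ] (ι → ℝ × ℝ) := LinearMap.pi fun i => (evalLM M (x i)).prod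
    (if a < x i ∧ (x i : ℝ) < b then derivLM hab M hMd (x i) else 0)
  have hL : LinearMap.ker L = ⊥ := by
    rw [LinearMap.ker_eq_bot']
    intro m hm
    have hm' : ∀ i, L m i = 0 := fun i => congrFun hm i
    refine Subtype.ext (eq_zero_of_vanish_on_signature hab hr M hM hunic g hg hE x w hw hw1 hx hsig
      m.1 m.2 (fun i => congrArg Prod.fst (hm' i)) fun i ha hb => ?_)
    have h2 := congrArg Prod.snd (hm' i)
    simp only [L, LinearMap.pi_apply, LinearMap.prod_apply, if_pos (And.intro ha hb)] at h2
    exact h2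
  obtain ⟨K, hK0, hK⟩ := LinearMap.exists_antilipschitzWith (𝕜 := ℝ) (E := M)
    (F := ι → ℝ × ℝ) L hL
  have hKpos : (0 : ℝ) < K := hK0
  have hnorm : ∀ m ∈ M, m ≠ 0 → ∃ i, ‖m‖ ≤ K * |m (x i)| ∨ ((a < x i ∧ (x i : ℝ) < b) ∧
      ‖m‖ ≤ K * |derivWithin (IccExtend hab.le m) (Icc a b) (x i)|) := by
    intro m hm hm0
    by_contra! hcon
    have hmp : 0 < ‖m‖ / K := div_pos (norm_pos_iff.2 hm0) hKpos
    have h1 : ‖(⟨m, hm⟩ : M)‖ ≤ K * ‖L ⟨m, hm⟩‖ := by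
      simpa using hK.le_mul_dist ⟨m, hm⟩ 0
    have h2 : ‖L ⟨m, hm⟩‖ < ‖m‖ / K := by
      rw [pi_norm_lt_iff hmp]
      intro i
      rw [Prod.norm_def, max_lt_iff]
      constructor
      · rw [lt_div_iff₀' hKpos]
        exact (hcon i).1
      · by_cases hi : a < x i ∧ (x i : ℝ) < b
        · rw [lt_div_iff₀' hKpos]
          simp only [L, LinearMap.pi_apply, LinearMap.prod_apply, if_pos hi]
          exact (hcon i).2 hi
        · simp only [L, LinearMap.pi_apply, LinearMap.prod_apply, if_neg hi]
          simpa using hmp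
    rw [lt_div_iff₀' hKpos] at h2
    exact absurd h1 (not_le.2 h2)
  let R := 2 * ‖g‖ + σ
  have hR : 0 < R := by positivity
  have hmR : ∀ m : C(Icc a b, ℝ), ‖g - m‖ - ‖g‖ ≤ σ → ‖m‖ ≤ R := by
    intro m h
    have := norm_le_norm_add_norm_sub g m
    simp only [R]
    linarith
  have hvalue : ∀ i, ∃ γ : ℝ, 0 < γ ∧ ∀ m ∈ M, ‖m‖ ≤ R → ‖m‖ ≤ K * |m (x i)| →
      γ * ‖m‖ ^ 2 ≤ ‖g - m‖ - ‖g‖ := by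
    intro i
    have hwi := hw i
    refine ⟨1 / (R * K * (1 / w i)), by positivity, fun m hm hmR h => ?_⟩
    rw [one_div, inv_mul_le_iff₀ (by positivity), pow_two]
    have h1 := signature_value_bound g m hE x w hw hw1 hx (hsig m hm) (hbest m hm) i
    calc ‖m‖ * ‖m‖ ≤ R * (K * (1 / w i * (‖g - m‖ - ‖g‖))) := by gcongr; exact h.trans (by gcongr)
      _ = _ := by ring
  have hderiv : ∀ i, (a < x i ∧ (x i : ℝ) < b) → ∃ γ : ℝ, 0 < γ ∧ ∀ m ∈ M, ‖m‖ ≤ R →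
      ‖m‖ ≤ K * |derivWithin (IccExtend hab.le m) (Icc a b) (x i)| →
      γ * ‖m‖ ^ 2 ≤ ‖g - m‖ - ‖g‖ := by
    intro i hi
    have hwi := hw i
    let Q := 1 + 1 / w i + Cg + CM * R
    have hQ : 0 < Q := by positivity
    let δ := min ((x i : ℝ) - a) (b - x i)
    have hδ : 0 < δ := lt_min (by linarith [hi.1]) (by linarith [hi.2])
    -- at an interior extremal point `|g|` drops only quadratically, which controls the
    -- derivative of `m`
    have hstep : ∀ m ∈ M, ‖m‖ ≤ R → ∀ t : ℝ, 0 ≤ t → t ≤ δ →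
        |derivWithin (IccExtend hab.le m) (Icc a b) (x i)| * t ≤
          Q * ((‖g - m‖ - ‖g‖) + t ^ 2) := by
      intro m hm hmR t ht0 htδ
      have hv := signature_value_bound g m hE x w hw hw1 hx (hsig m hm) (hbest m hm) i
      have hΔ0 : 0 ≤ ‖g - m‖ - ‖g‖ := sub_nonneg.2 (hbest m hm)
      have hΔd : ‖g - m‖ = ‖g‖ + (‖g - m‖ - ‖g‖) := by ring
      set Δ := ‖g - m‖ - ‖g‖
      set D := derivWithin (IccExtend hab.le m) (Icc a b) (x i)
      have hg2 : g (x i) ^ 2 = ‖g‖ ^ 2 := by rw [← hx i, sq_abs]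
      have main : ∀ s : ℝ, |s| ≤ δ →
          -(g (x i) * (D * s)) ≤ ‖g‖ * (Q * (Δ + s ^ 2)) := by
        intro s hs
        have hs' := abs_le.1 hs
        have hy : (x i : ℝ) + s ∈ Icc a b :=
          ⟨by linarith [min_le_left ((x i : ℝ) - a) (b - x i)],
            by linarith [min_le_right ((x i : ℝ) - a) (b - x i)]⟩
        let y : Icc a b := ⟨x i + s, hy⟩
        have h1 := hTg (x i) (x i).2 y y.2
        rw [derivWithin_eq_zero_of_extremal hab g (x i) (hx i) hE hi.1 hi.2, IccExtend_val,
          IccExtend_val, zero_mul, sub_zero] at h1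
        have h2 := hTM m hm (x i) y
        have hys : (y : ℝ) - x i = s := by simp [y]
        rw [hys] at h1 h2
        have h3 : |(g - m) y| ≤ ‖g - m‖ := (g - m).norm_coe_le_norm y
        rw [hΔd, ContinuousMap.sub_apply] at h3
        have h4 : CM * ‖m‖ * s ^ 2 ≤ CM * R * s ^ 2 := by gcongr
        have hmul : ∀ z B : ℝ, |z| ≤ B → g (x i) * z ≤ ‖g‖ * B := by
          intro z B hz
          refine (le_abs_self _).trans ?_
          rw [abs_mul, hx]
          exact mul_le_mul_of_nonneg_left hz hE.le
        have k1 := hmul _ _ h1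
        have k1' := hmul _ _ ((abs_neg _).le.trans h1)
        have k2 := hmul _ _ (h2.trans h4)
        have k3 := hmul _ _ h3
        have k4 := hmul _ _ hv
        have h5 : Δ + 1 / w i * Δ + (Cg + CM * R) * s ^ 2 ≤ Q * (Δ + s ^ 2) := by
          have e1 : 0 ≤ (Cg + CM * R) * Δ := by positivity
          have e2 : 0 ≤ (1 + 1 / w i) * s ^ 2 := by positivity
          simp only [Q]
          linarith
        have h6 := mul_le_mul_of_nonneg_left h5 hE.le
        refine le_trans ?_ h6
        linarith
      have p := main t (by rwa [abs_of_nonneg ht0])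
      have q := main (-t) (by rwa [abs_neg, abs_of_nonneg ht0])
      have habs : |g (x i) * (D * t)| ≤ ‖g‖ * (Q * (Δ + t ^ 2)) := by
        rw [abs_le]
        constructor
        · linarith
        · rw [neg_sq] at q
          linarith
      rw [abs_mul, hx, abs_mul, abs_of_nonneg ht0] at habs
      exact le_of_mul_le_mul_left habs hE
    -- the increment `t = ε ‖m‖` makes the `t ^ 2` term absorbable
    let ε := min (δ / R) (1 / (2 * (K * Q)))
    have hKQ : 0 < K * Q := by positivity
    have hε : 0 < ε := lt_min (by positivity) (by positivity)
    refine ⟨ε / (2 * (K * Q)), by positivity, fun m hm hmR h => ?_⟩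
    have hεδ : ε * ‖m‖ ≤ δ := by
      calc ε * ‖m‖ ≤ δ / R * R := by
            gcongr
            exact min_le_left _ _
        _ = δ := div_mul_cancel₀ _ hR.ne'
    have h1 := hstep m hm hmR (ε * ‖m‖) (by positivity) hεδ
    have h2 : ε * (K * Q) ≤ 1 / 2 := by
      calc ε * (K * Q) ≤ 1 / (2 * (K * Q)) * (K * Q) := by
            gcongr
            exact min_le_right _ _
        _ = 1 / 2 := by field_simp
    have h3 : ‖m‖ * (ε * ‖m‖) ≤ K * (Q * (‖g - m‖ - ‖g‖ + (ε * ‖m‖) ^ 2)) := by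
      calc _ ≤ K * |derivWithin (IccExtend hab.le m) (Icc a b) (x i)| * (ε * ‖m‖) := by gcongr
        _ ≤ _ := by rw [mul_assoc]; gcongr
    have h4 : ε * (K * Q) * (ε * ‖m‖ ^ 2) ≤ 1 / 2 * (ε * ‖m‖ ^ 2) := by gcongr
    rw [div_mul_eq_mul_div, div_le_iff₀ (by positivity)]
    linarith
  have hboth : ∀ i, ∃ γ : ℝ, 0 < γ ∧ ∀ m ∈ M, ‖m‖ ≤ R → (‖m‖ ≤ K * |m (x i)| ∨
      ((a < x i ∧ (x i : ℝ) < b) ∧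
        ‖m‖ ≤ K * |derivWithin (IccExtend hab.le m) (Icc a b) (x i)|)) →
      γ * ‖m‖ ^ 2 ≤ ‖g - m‖ - ‖g‖ := by
    intro i
    obtain ⟨γ₁, h₁, h₁'⟩ := hvalue i
    by_cases hi : a < x i ∧ (x i : ℝ) < b
    · obtain ⟨γ₂, h₂, h₂'⟩ := hderiv i hi
      refine ⟨min γ₁ γ₂, lt_min h₁ h₂, fun m hm hmR h => ?_⟩
      rcases h with h | h
      · exact le_trans (by gcongr; exact min_le_left _ _) (h₁' m hm hmR h)
      · exact le_trans (by gcongr; exact min_le_right _ _) (h₂' m hm hmR h.2)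
    · exact ⟨γ₁, h₁, fun m hm hmR h => h₁' m hm hmR (h.resolve_right fun h => hi h.1)⟩
  choose γ hγ hγ' using hboth
  obtain ⟨i₀, hi₀⟩ := Finite.exists_min γ
  refine ⟨γ i₀, hγ i₀, fun m hm hmσ => ?_⟩
  rcases eq_or_ne m 0 with rfl | hm0
  · simp
  obtain ⟨i, hi⟩ := hnorm m hm hm0
  exact le_trans (by gcongr; exact hi₀ i) (hγ' i m hm (hmR m hmσ) hi)


/-- (Kroó.)  Let `r ≥ 2` and let `M` be a finite-dimensional
subspace of `C[a,b]` whose elements are `r`-times continuously differentiable, and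
assume `M` is a unicity space with respect to `C^r[a,b]` in the uniform norm.  Let
`f ∈ C^r[a,b]`, let `m*` be its best uniform approximant from `M`, and let `σ > 0`.
Then there is `γ > 0` (depending only on `f`, `M`, `σ`) such that every `m ∈ M`
with `‖f − m‖ − ‖f − m*‖ ≤ σ` satisfies `‖f − m‖ − ‖f − m*‖ ≥ γ‖m − m*‖²`. -/
theorem stmt_18 (a b : ℝ) (hab : a < b) (r : ℕ) (hr : 2 ≤ r)
    (M : Submodule ℝ C(↥(Set.Icc a b), ℝ)) [FiniteDimensional ℝ M]
    (hMsmooth : ∀ m ∈ M, ∃ F : ℝ → ℝ, ContDiffOn ℝ r F (Set.Icc a b) ∧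
      ∀ x : ↥(Set.Icc a b), m x = F ↑x)
    (hunicity : ∀ g : C(↥(Set.Icc a b), ℝ),
      (∃ G : ℝ → ℝ, ContDiffOn ℝ r G (Set.Icc a b) ∧ ∀ x : ↥(Set.Icc a b), g x = G ↑x) →
      ∃! mg : C(↥(Set.Icc a b), ℝ), mg ∈ M ∧ ∀ m ∈ M, ‖g - mg‖ ≤ ‖g - m‖)
    (f : C(↥(Set.Icc a b), ℝ))
    (hf : ∃ F : ℝ → ℝ, ContDiffOn ℝ r F (Set.Icc a b) ∧ ∀ x : ↥(Set.Icc a b), f x = F ↑x)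
    (mstar : C(↥(Set.Icc a b), ℝ)) (hmem : mstar ∈ M)
    (hbest : ∀ m ∈ M, ‖f - mstar‖ ≤ ‖f - m‖)
    (σ : ℝ) (hσ : 0 < σ) :
    ∃ γ : ℝ, 0 < γ ∧ ∀ m ∈ M, ‖f - m‖ - ‖f - mstar‖ ≤ σ →
      γ * ‖m - mstar‖ ^ 2 ≤ ‖f - m‖ - ‖f - mstar‖ := by
  have hext : ∀ g : C(Icc a b, ℝ), (∃ G : ℝ → ℝ, ContDiffOn ℝ r G (Icc a b) ∧
      ∀ x : Icc a b, g x = G x) → ContDiffOn ℝ r (IccExtend hab.le g) (Icc a b) := by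
    rintro g ⟨G, hG, hgG⟩
    refine hG.congr fun y hy => ?_
    rw [IccExtend_of_mem _ _ hy, hgG]
  have hM : ∀ m ∈ M, ContDiffOn ℝ r (IccExtend hab.le m) (Icc a b) :=
    fun m hm => hext m (hMsmooth m hm)
  have hg : ContDiffOn ℝ r (IccExtend hab.le (f - mstar)) (Icc a b) :=
    (hext f hf).sub (hM mstar hmem)
  have hsub : ∀ m, f - mstar - (m - mstar) = f - m := fun m => by abel
  obtain ⟨γ, hγ, h⟩ := quadratic_bound hab hr M hM
    (fun g hg => hunicity g ⟨_, hg, fun x => (IccExtend_val hab.le g x).symm⟩) (f - mstar) hg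
    (fun m hm => by
      have := hbest (m + mstar) (M.add_mem hm hmem)
      rwa [← hsub (m + mstar), add_sub_cancel_right] at this) σ hσ
  refine ⟨γ, hγ, fun m hm hmσ => ?_⟩
  have := h (m - mstar) (M.sub_mem hm hmem)
  rw [hsub] at this
  exact this hmσ
end
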